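/- Define P(z) = z·(1 − z/(iλ_2))·(1 − z/(iλ_{−2}))·∏_{k∈ℤ∖{0,±2}} (1 − z/(iλ_k^+)) · ∏_{k∈ℤ∖{0,±2}} (1 − z/(iλ_k^-)), where the first infinite product is taken as the symmetric limit over 0 < |k| ≤ K, K → ∞ (it converges locally uniformly since iλ_k^+ = −k − i + O(k^{−2})) and the second product converges absolutely (since |λ_k^-| ≍ k²). Then P is an entire function of exponential type at most π, and there exists C > 0 such that: (a) |P(x)| ≤ C (1+|x|)^{−3} e^{√2·π·√|x|} for every x ∈ ℝ; (b) |P'(iλ_k^+)| ≥ C^{−1} |k|^{−3} e^{√2·π·√|k|} for every k ∈ ℤ∖{0,±2}; (c) |P'(iλ_k^-)| ≥ C^{−1} |k|^{−7} e^{π k²} for every k ∈ ℤ∖{0,±2}. -/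

import Mathlib

open Real Filter

/-- The hyperbolic eigenvalue branch `λ_k⁺ = (-(k² - 2ik) + √(k⁴ - 4k²))/2`, with the
principal complex square root. -/
noncomputable def lamP (k : ℤ) : ℂ :=
  (-((k:ℂ)^2 - 2*Complex.I*(k:ℂ)) + ((k:ℂ)^4 - 4*(k:ℂ)^2) ^ ((1:ℂ)/2)) / 2

/-- The parabolic eigenvalue branch `λ_k⁻ = (-(k² - 2ik) - √(k⁴ - 4k²))/2`, with the
principal complex square root. -/
noncomputable def lamM (k : ℤ) : ℂ :=
  (-((k:ℂ)^2 - 2*Complex.I*(k:ℂ)) - ((k:ℂ)^4 - 4*(k:ℂ)^2) ^ ((1:ℂ)/2)) / 2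

/-- The symmetric partial products defining the canonical product `P` vanishing at the
points `iλ_k^±`. -/
noncomputable def Ppartial (K : ℕ) (z : ℂ) : ℂ :=
  z * (1 - z / (Complex.I * lamP 2)) * (1 - z / (Complex.I * lamP (-2)))
    * (∏ k ∈ ((Finset.Icc (-(K:ℤ)) (K:ℤ)) \ {0, 2, -2}), (1 - z / (Complex.I * lamP k)))
    * (∏ k ∈ ((Finset.Icc (-(K:ℤ)) (K:ℤ)) \ {0, 2, -2}), (1 - z / (Complex.I * lamM k)))

/-!
Write `i λ_{±k}⁺ = ∓k - i a` and `i λ_{±k}⁻ = ∓k - i b`. Then `a + b = a b = k²`, so that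
`k² + c² = k² c` for `c = a` and `c = b`, and the two factors of `P` belonging to `±k` combine to
the polynomial `1 - 2iz/k² - z²/(k² c)`, which makes both products absolutely convergent.

Since `a = 1 + O(k⁻²)` and `b ≈ k²`, every factor can be compared, up to `exp (C / k²)`, with the
factor of an explicit product: away from its zeros the hyperbolic product behaves like
`∏ (1 - (z + i)² / k²)`, a sine product, and the parabolic product, on the real axis and at the
hyperbolic zeros, like `∏ (1 + x² / k⁴)`, the squared modulus of a sine product at `√(i x)`. At a
zero, the remaining factors of its own branch are compared with `∏ |k² - n²| / k² ≥ 1/2` (squared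
in the parabolic case). These comparisons lose only constants for `|k| ≥ 3`; at `k = ±1` it is
enough that the zeros are simple.
-/

/-! ### Comparison products -/

lemma sum_one_div_sq_le_two (s : Finset ℕ) : ∑ k ∈ s, 1 / (k : ℝ) ^ 2 ≤ 2 := by
  have hle := sum_le_hasSum s (fun k _ => by positivity) hasSum_zeta_two
  nlinarith [Real.pi_lt_d2, Real.pi_pos]

lemma prod_le_exp_mul_prod {f g : ℕ → ℝ} {C : ℝ} (hC : 0 ≤ C) (s : Finset ℕ)
    (hf : ∀ k ∈ s, 0 ≤ f k) (hfg : ∀ k ∈ s, f k ≤ exp (C / (k : ℝ) ^ 2) * g k) :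
    ∏ k ∈ s, f k ≤ exp (2 * C) * ∏ k ∈ s, g k := by
  have hg : ∀ k ∈ s, 0 ≤ g k := fun k hk =>
    nonneg_of_mul_nonneg_right ((hf k hk).trans (hfg k hk)) (exp_pos _)
  have hsum : ∑ k ∈ s, C / (k : ℝ) ^ 2 ≤ 2 * C := by
    simpa only [Finset.mul_sum, mul_one_div, mul_comm C 2]
      using mul_le_mul_of_nonneg_left (sum_one_div_sq_le_two s) hC
  calc ∏ k ∈ s, f k ≤ ∏ k ∈ s, exp (C / (k : ℝ) ^ 2) * g k := Finset.prod_le_prod hf hfg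
    _ = exp (∑ k ∈ s, C / (k : ℝ) ^ 2) * ∏ k ∈ s, g k := by
      rw [Finset.prod_mul_distrib, exp_sum]
    _ ≤ exp (2 * C) * ∏ k ∈ s, g k :=
      mul_le_mul_of_nonneg_right (exp_le_exp.mpr hsum) (Finset.prod_nonneg hg)

lemma norm_sin_le_exp_abs_im (z : ℂ) : ‖Complex.sin z‖ ≤ exp |z.im| := by
  have hneg : ‖Complex.exp (-z * Complex.I)‖ ≤ exp |z.im| := by
    simpa [Complex.norm_exp] using le_abs_self z.im
  have hpos : ‖Complex.exp (z * Complex.I)‖ ≤ exp |z.im| := by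
    simpa [Complex.norm_exp] using neg_le_abs z.im
  have hsub := norm_sub_le (Complex.exp (-z * Complex.I)) (Complex.exp (z * Complex.I))
  rw [Complex.sin, norm_div, norm_mul, Complex.norm_I, Complex.norm_two]
  linarith

lemma exp_abs_im_div_four_le_norm_sin {z : ℂ} (hz : 1 ≤ |z.im|) :
    exp |z.im| / 4 ≤ ‖Complex.sin z‖ := by
  have hdiff : exp |z.im| - exp (-|z.im|)
      ≤ ‖Complex.exp (-z * Complex.I) - Complex.exp (z * Complex.I)‖ := by
    have htri := abs_norm_sub_norm_le (Complex.exp (-z * Complex.I)) (Complex.exp (z * Complex.I))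
    have hneg : ‖Complex.exp (-z * Complex.I)‖ = exp z.im := by simp [Complex.norm_exp]
    have hpos : ‖Complex.exp (z * Complex.I)‖ = exp (-z.im) := by simp [Complex.norm_exp]
    rw [hneg, hpos] at htri
    refine le_trans ?_ htri
    rcases abs_cases z.im with ⟨h, -⟩ | ⟨h, -⟩ <;> rw [h]
    · exact le_abs_self _
    · rw [neg_neg, abs_sub_comm]
      exact le_abs_self _
  have hexp : exp (-|z.im|) ≤ exp |z.im| / 2 := by
    have hsmall : exp (-|z.im|) ≤ 1 := exp_le_one_iff.mpr (by linarith)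
    linarith [add_one_le_exp |z.im|]
  rw [Complex.sin, norm_div, norm_mul, Complex.norm_I, Complex.norm_two]
  linarith

lemma prod_Icc_one_eq_prod_range {M : Type*} [CommMonoid M] (f : ℕ → M) (N : ℕ) :
    ∏ k ∈ Finset.Icc 1 N, f k = ∏ j ∈ Finset.range N, f (j + 1) := by
  rw [Finset.range_eq_Ico, Finset.prod_Ico_add' f 0 N 1]
  rfl

lemma tendsto_prod_norm_one_sub_sq_div_sq {v : ℂ} (hv : v ≠ 0) :
    Tendsto (fun N : ℕ => ∏ k ∈ Finset.Icc 1 N, ‖1 - v ^ 2 / (k : ℂ) ^ 2‖) atTop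
      (nhds (‖Complex.sin (π * v)‖ / (π * ‖v‖))) := by
  refine ((Complex.tendsto_euler_sin_prod v).norm.div_const (π * ‖v‖)).congr fun N => ?_
  rw [norm_mul, norm_mul, Complex.norm_real, norm_of_nonneg pi_pos.le, norm_prod,
    mul_div_cancel_left₀ _ (mul_ne_zero pi_ne_zero (norm_ne_zero_iff.mpr hv)),
    prod_Icc_one_eq_prod_range]
  simp only [Nat.cast_add, Nat.cast_one]

lemma eventually_prod_norm_one_sub_sq_div_sq_le {v : ℂ} (hv : v ≠ 0) :
    ∀ᶠ N : ℕ in atTop,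
      ∏ k ∈ Finset.Icc 1 N, ‖1 - v ^ 2 / (k : ℂ) ^ 2‖ ≤ exp (π * |v.im|) / ‖v‖ := by
  refine ((tendsto_prod_norm_one_sub_sq_div_sq hv).eventually_lt_const ?_).mono fun N => le_of_lt
  have hv' : 0 < ‖v‖ := norm_pos_iff.mpr hv
  have hsin := norm_sin_le_exp_abs_im (π * v)
  rw [Complex.im_ofReal_mul, abs_mul, abs_of_pos pi_pos] at hsin
  rw [div_lt_div_iff₀ (by positivity) hv']
  nlinarith [exp_pos (π * |v.im|), pi_gt_three, mul_pos (exp_pos (π * |v.im|)) hv']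

lemma eventually_le_prod_norm_one_sub_sq_div_sq {v : ℂ} (hv : 1 ≤ |v.im|) :
    ∀ᶠ N : ℕ in atTop,
      exp (π * |v.im|) / (16 * ‖v‖) ≤ ∏ k ∈ Finset.Icc 1 N, ‖1 - v ^ 2 / (k : ℂ) ^ 2‖ := by
  have hv0 : v ≠ 0 := by
    rintro rfl
    norm_num at hv
  refine ((tendsto_prod_norm_one_sub_sq_div_sq hv0).eventually_const_lt ?_).mono fun N => le_of_lt
  have hv' : 0 < ‖v‖ := norm_pos_iff.mpr hv0
  have him : |(π * v).im| = π * |v.im| := by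
    rw [Complex.im_ofReal_mul, abs_mul, abs_of_pos pi_pos]
  have hsin := exp_abs_im_div_four_le_norm_sin (z := π * v) (by
    rw [him]
    nlinarith [pi_gt_three])
  rw [him] at hsin
  rw [div_lt_div_iff₀ (by positivity) (by positivity)]
  nlinarith [exp_pos (π * |v.im|), pi_lt_four, mul_pos (exp_pos (π * |v.im|)) hv',
    mul_le_mul_of_nonneg_right hsin hv'.le]

lemma monotone_prod_Icc_one_of_one_le {f : ℕ → ℝ} (hf : ∀ k, 1 ≤ f k) :
    Monotone fun N => ∏ k ∈ Finset.Icc 1 N, f k := fun _ _ h =>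
  Finset.prod_le_prod_of_subset_of_one_le (Finset.Icc_subset_Icc_right h)
    (fun k _ => zero_le_one.trans (hf k)) fun k _ _ => hf k

lemma prod_one_add_sq_div_sq_le {y : ℝ} (hy : 1 ≤ y) (N : ℕ) :
    ∏ k ∈ Finset.Icc 1 N, (1 + y ^ 2 / (k : ℝ) ^ 2) ≤ exp (π * y) := by
  have hy0 : 0 < y := by linarith
  have hfactor (k : ℕ) : ‖1 - (y * Complex.I) ^ 2 / (k : ℂ) ^ 2‖ = 1 + y ^ 2 / (k : ℝ) ^ 2 := by
    rw [mul_pow, Complex.I_sq, mul_neg_one, neg_div, sub_neg_eq_add]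
    norm_cast
    exact norm_of_nonneg (by positivity)
  have hbound := eventually_prod_norm_one_sub_sq_div_sq_le (v := y * Complex.I) (by simp [hy0.ne'])
  simp only [hfactor, Complex.im_ofReal_mul, Complex.I_im, mul_one, abs_of_pos hy0, norm_mul,
    Complex.norm_real, Complex.norm_I, norm_of_nonneg hy0.le] at hbound
  obtain ⟨M, hM, hNM⟩ := (hbound.and (eventually_ge_atTop N)).exists
  calc ∏ k ∈ Finset.Icc 1 N, (1 + y ^ 2 / (k : ℝ) ^ 2)
      ≤ ∏ k ∈ Finset.Icc 1 M, (1 + y ^ 2 / (k : ℝ) ^ 2) :=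
        monotone_prod_Icc_one_of_one_le
          (fun k => le_add_of_nonneg_right (by positivity)) hNM
    _ ≤ exp (π * y) / y := hM
    _ ≤ exp (π * y) := div_le_self (exp_pos _).le hy

/-- The square root of `i r` in the first quadrant: the quartic products
`∏ (1 + r² / k⁴) = ∏ |1 - i r / k²|²` are sine products at this point. -/
noncomputable def sqrtIMul (r : ℝ) : ℂ := √(r / 2) * (1 + Complex.I)

lemma sqrtIMul_sq {r : ℝ} (hr : 0 ≤ r) : sqrtIMul r ^ 2 = r * Complex.I := by
  rw [sqrtIMul, mul_pow, ← Complex.ofReal_pow, sq_sqrt (by positivity)]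
  push_cast
  linear_combination (r / 2 : ℂ) * Complex.I_sq

lemma norm_sqrtIMul_sq {r : ℝ} (hr : 0 ≤ r) : ‖sqrtIMul r‖ ^ 2 = r := by
  rw [← norm_pow, sqrtIMul_sq hr, norm_mul, Complex.norm_I, mul_one, Complex.norm_real,
    norm_of_nonneg hr]

lemma abs_im_sqrtIMul (r : ℝ) : |(sqrtIMul r).im| = √(r / 2) := by
  rw [sqrtIMul, Complex.im_ofReal_mul, Complex.add_im, Complex.one_im, Complex.I_im, zero_add,
    mul_one, abs_of_nonneg (sqrt_nonneg _)]

lemma one_add_sq_div_pow_four_eq_norm_sq {r : ℝ} (hr : 0 ≤ r) (k : ℕ) :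
    1 + r ^ 2 / (k : ℝ) ^ 4 = ‖1 - sqrtIMul r ^ 2 / (k : ℂ) ^ 2‖ ^ 2 := by
  have hfactor : 1 - sqrtIMul r ^ 2 / (k : ℂ) ^ 2
      = ((1 : ℝ) : ℂ) + ((-(r / (k : ℝ) ^ 2) : ℝ) : ℂ) * Complex.I := by
    rw [sqrtIMul_sq hr]
    push_cast
    ring
  rw [hfactor, Complex.sq_norm, Complex.normSq_add_mul_I, neg_sq, div_pow, one_pow, ← pow_mul]

lemma exp_sqrt_two_mul_pi_mul_sqrt (r : ℝ) :
    exp (√2 * π * √r) = exp (π * √(r / 2)) ^ 2 := by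
  have htwo : √2 ^ 2 = 2 := sq_sqrt (by norm_num)
  rw [← exp_nat_mul, sqrt_div' _ (by norm_num)]
  congr 1
  field_simp
  push_cast
  linear_combination √r * htwo

lemma prod_one_add_sq_div_pow_four_le {r : ℝ} (hr : 1 ≤ r) (N : ℕ) :
    ∏ k ∈ Finset.Icc 1 N, (1 + r ^ 2 / (k : ℝ) ^ 4) ≤ exp (√2 * π * √r) / r := by
  have hr0 : 0 < r := by linarith
  have hroot : sqrtIMul r ≠ 0 := fun h => hr0.ne (by simpa [h] using norm_sqrtIMul_sq hr0.le)
  obtain ⟨M, hM, hNM⟩ :=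
    ((eventually_prod_norm_one_sub_sq_div_sq_le hroot).and (eventually_ge_atTop N)).exists
  calc ∏ k ∈ Finset.Icc 1 N, (1 + r ^ 2 / (k : ℝ) ^ 4)
      ≤ ∏ k ∈ Finset.Icc 1 M, (1 + r ^ 2 / (k : ℝ) ^ 4) :=
        monotone_prod_Icc_one_of_one_le (fun k => le_add_of_nonneg_right (by positivity)) hNM
    _ = (∏ k ∈ Finset.Icc 1 M, ‖1 - sqrtIMul r ^ 2 / (k : ℂ) ^ 2‖) ^ 2 := by
      simp_rw [one_add_sq_div_pow_four_eq_norm_sq hr0.le, Finset.prod_pow]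
    _ ≤ (exp (π * |(sqrtIMul r).im|) / ‖sqrtIMul r‖) ^ 2 :=
      pow_le_pow_left₀ (Finset.prod_nonneg fun k _ => norm_nonneg _) hM 2
    _ = exp (√2 * π * √r) / r := by
      rw [div_pow, norm_sqrtIMul_sq hr0.le, abs_im_sqrtIMul, exp_sqrt_two_mul_pi_mul_sqrt]

lemma eventually_le_prod_one_add_sq_div_pow_four {r : ℝ} (hr : 2 ≤ r) :
    ∀ᶠ N : ℕ in atTop, exp (√2 * π * √r) / (256 * r)
      ≤ ∏ k ∈ Finset.Icc 1 N, (1 + r ^ 2 / (k : ℝ) ^ 4) := by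
  have hr0 : 0 ≤ r := by linarith
  have hone : 1 ≤ |(sqrtIMul r).im| := by
    rw [abs_im_sqrtIMul]
    exact one_le_sqrt.mpr (by linarith)
  filter_upwards [eventually_le_prod_norm_one_sub_sq_div_sq hone] with N hN
  calc exp (√2 * π * √r) / (256 * r)
      = (exp (π * |(sqrtIMul r).im|) / (16 * ‖sqrtIMul r‖)) ^ 2 := by
        rw [div_pow, mul_pow, norm_sqrtIMul_sq hr0, abs_im_sqrtIMul,
          exp_sqrt_two_mul_pi_mul_sqrt]
        norm_num
    _ ≤ (∏ k ∈ Finset.Icc 1 N, ‖1 - sqrtIMul r ^ 2 / (k : ℂ) ^ 2‖) ^ 2 :=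
      pow_le_pow_left₀ (by positivity) hN 2
    _ = ∏ k ∈ Finset.Icc 1 N, (1 + r ^ 2 / (k : ℝ) ^ 4) := by
      simp_rw [one_add_sq_div_pow_four_eq_norm_sq hr0, Finset.prod_pow]

lemma mul_factorial_mul_prod_sq_sub_sq {n m : ℕ} (h : m < n) :
    (n : ℝ) * (n - m - 1).factorial * ∏ k ∈ Finset.Icc 1 m, ((n : ℝ) ^ 2 - (k : ℝ) ^ 2)
      = (n + m).factorial := by
  induction m with
  | zero =>
    simp only [Nat.sub_zero, Finset.Icc_eq_empty_of_lt zero_lt_one, Finset.prod_empty, mul_one,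
      add_zero]
    exact_mod_cast Nat.mul_factorial_pred h.ne'
  | succ m ih =>
    obtain ⟨d, rfl⟩ : ∃ d, n = m + 1 + 1 + d := Nat.exists_eq_add_of_le h
    have ih' := ih (by omega)
    rw [show m + 1 + 1 + d - m - 1 = d + 1 by omega, Nat.factorial_succ d] at ih'
    rw [Finset.prod_Icc_succ_top (by omega), ← add_assoc, Nat.factorial_succ,
      show m + 1 + 1 + d - (m + 1) - 1 = d by omega]
    push_cast at ih' ⊢
    rw [← ih']
    ring

lemma prod_abs_sq_sub_succ_sq_div_sq_eq (m : ℕ) :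
    ∏ k ∈ Finset.Icc 1 m, |(k : ℝ) ^ 2 - ((m + 1 : ℕ) : ℝ) ^ 2| / (k : ℝ) ^ 2
      = (m + 1 + (m + 1)).factorial / (2 * ((m + 1).factorial : ℝ) ^ 2) := by
  have habs : ∏ k ∈ Finset.Icc 1 m, |(k : ℝ) ^ 2 - ((m + 1 : ℕ) : ℝ) ^ 2|
      = ∏ k ∈ Finset.Icc 1 m, (((m + 1 : ℕ) : ℝ) ^ 2 - (k : ℝ) ^ 2) := by
    refine Finset.prod_congr rfl fun k hk => ?_
    have hle : (k : ℝ) ≤ (m + 1 : ℕ) := by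
      exact_mod_cast (Finset.mem_Icc.mp hk).2.trans (Nat.le_succ m)
    rw [abs_sub_comm, abs_of_nonneg (sub_nonneg.mpr (pow_le_pow_left₀ k.cast_nonneg hle 2))]
  have hnum := mul_factorial_mul_prod_sq_sub_sq (Nat.lt_succ_self m)
  have hden : ∏ k ∈ Finset.Icc 1 m, (k : ℝ) = m.factorial := by
    rw [prod_Icc_one_eq_prod_range]
    exact_mod_cast Finset.prod_range_add_one_eq_factorial m
  rw [Finset.prod_div_distrib, habs, Finset.prod_pow, hden, Nat.factorial_succ m,
    ← add_assoc (m + 1) m 1, Nat.factorial_succ (m + 1 + m), Nat.cast_mul, ← hnum,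
    show m.succ - m - 1 = 0 by omega, Nat.factorial_zero]
  have := m.factorial_ne_zero
  push_cast
  field_simp
  ring

lemma prod_abs_sq_sub_sq_div_sq_eq {n N : ℕ} (hn : 1 ≤ n) (h : n ≤ N) :
    ∏ k ∈ Finset.Icc 1 N \ {n}, |(k : ℝ) ^ 2 - (n : ℝ) ^ 2| / (k : ℝ) ^ 2
      = (N - n).factorial * (N + n).factorial / (2 * (N.factorial : ℝ) ^ 2) := by
  induction N, h using Nat.le_induction with
  | base =>
    obtain ⟨m, rfl⟩ : ∃ m, n = m + 1 := ⟨n - 1, by omega⟩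
    have hIcc : Finset.Icc 1 (m + 1) \ {m + 1} = Finset.Icc 1 m := by
      ext k
      simp only [Finset.mem_sdiff, Finset.mem_Icc, Finset.mem_singleton]
      omega
    rw [hIcc, prod_abs_sq_sub_succ_sq_div_sq_eq, Nat.sub_self, Nat.factorial_zero, Nat.cast_one,
      one_mul]
  | succ N hN ih =>
    obtain ⟨d, rfl⟩ : ∃ d, N = n + d := Nat.exists_eq_add_of_le hN
    have hIcc : Finset.Icc 1 (n + d + 1) \ {n}
        = insert (n + d + 1) (Finset.Icc 1 (n + d) \ {n}) := by
      ext k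
      simp only [Finset.mem_sdiff, Finset.mem_Icc, Finset.mem_singleton, Finset.mem_insert]
      omega
    have hle : (n : ℝ) ^ 2 ≤ ((n + d + 1 : ℕ) : ℝ) ^ 2 := by
      gcongr
      omega
    rw [hIcc, Finset.prod_insert (by simp), ih, abs_of_nonneg (sub_nonneg.mpr hle),
      show n + d + 1 - n = d + 1 by omega, show n + d - n = d by omega,
      show n + d + 1 + n = n + d + n + 1 by omega]
    simp only [Nat.factorial_succ, Nat.cast_mul]
    have := (n + d).factorial_ne_zero
    push_cast
    field_simp
    ring

lemma factorial_sq_le_factorial_sub_mul_factorial_add {n N : ℕ} (h : n ≤ N) :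
    N.factorial ^ 2 ≤ (N - n).factorial * (N + n).factorial := by
  have hchoose := Nat.choose_mul_factorial_mul_factorial (show N - n ≤ 2 * N by omega)
  have hcentral := Nat.choose_mul_factorial_mul_factorial (show N ≤ 2 * N by omega)
  rw [show 2 * N - (N - n) = N + n by omega] at hchoose
  rw [show 2 * N - N = N by omega, ← Nat.centralBinom_eq_two_mul_choose] at hcentral
  refine Nat.le_of_mul_le_mul_left ?_ N.centralBinom_pos
  calc N.centralBinom * N.factorial ^ 2
      = (2 * N).choose (N - n) * ((N - n).factorial * (N + n).factorial) := by
        rw [sq, ← mul_assoc, hcentral, ← mul_assoc, hchoose]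
    _ ≤ N.centralBinom * ((N - n).factorial * (N + n).factorial) :=
      Nat.mul_le_mul_right _ (Nat.choose_le_centralBinom _ _)

lemma one_half_le_prod_abs_sq_sub_sq_div_sq {n N : ℕ} (hn : 1 ≤ n) (h : n ≤ N) :
    1 / 2 ≤ ∏ k ∈ Finset.Icc 1 N \ {n}, |(k : ℝ) ^ 2 - (n : ℝ) ^ 2| / (k : ℝ) ^ 2 := by
  have hfact : (N.factorial : ℝ) ^ 2 ≤ (N - n).factorial * (N + n).factorial := by
    exact_mod_cast factorial_sq_le_factorial_sub_mul_factorial_add h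
  rw [prod_abs_sq_sub_sq_div_sq_eq hn h, div_le_div_iff₀ two_pos (by positivity)]
  linarith

/-! ### Products of paired factors -/

lemma tendstoLocallyUniformly_prod_range_of_norm_sub_one_le {X : Type*} [TopologicalSpace X]
    [LocallyCompactSpace X] {f : ℕ → X → ℂ} {φ : X → ℝ} (hf : ∀ k, Continuous (f k))
    (hφ : Continuous φ) (hle : ∀ k x, ‖f k x - 1‖ ≤ φ x / (k : ℝ) ^ 2) :
    TendstoLocallyUniformly (fun N x => ∏ k ∈ Finset.range N, f k x) (fun x => ∏' k, f k x)
      atTop := by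
  have hprod : HasProdLocallyUniformly (fun k x => 1 + (f k x - 1))
      (fun x => ∏' k, (1 + (f k x - 1))) := by
    refine hasProdLocallyUniformly_of_forall_compact fun K hK => ?_
    obtain ⟨R, hR⟩ := hK.bddAbove_image hφ.continuousOn
    refine Summable.hasProdUniformlyOn_nat_one_add hK (u := fun k => R / (k : ℝ) ^ 2) ?_ ?_ ?_
    · simpa only [mul_one_div] using (hasSum_zeta_two.summable.mul_left R)
    · refine Eventually.of_forall fun k x hx => (hle k x).trans ?_
      gcongr
      exact hR ⟨x, hx, rfl⟩
    · exact fun k => ((hf k).sub continuous_const).continuousOn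
  simpa only [add_sub_cancel] using hprod.tendstoLocallyUniformly_finsetRange

lemma tprod_ne_zero_of_norm_sub_one_le {f : ℕ → ℂ} {C : ℝ} (hf : ∀ k, f k ≠ 0)
    (hle : ∀ k, ‖f k - 1‖ ≤ C / (k : ℝ) ^ 2) : ∏' k, f k ≠ 0 := by
  have hsum : Summable fun k => ‖f k - 1‖ := by
    refine Summable.of_nonneg_of_le (fun k => norm_nonneg _) hle ?_
    simpa only [mul_one_div] using (hasSum_zeta_two.summable.mul_left C)
  simpa only [add_sub_cancel]
    using tprod_one_add_ne_zero_of_summable (fun k => by simpa using hf k) hsum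

lemma deriv_mul_of_eq_zero {f g : ℂ → ℂ} {w : ℂ} (hf : DifferentiableAt ℂ f w)
    (hg : DifferentiableAt ℂ g w) (hw : f w = 0) :
    deriv (fun z => f z * g z) w = deriv f w * g w := by
  rw [deriv_fun_mul hf hg, hw, zero_mul, add_zero]

/-- The product of the factors `1 - z / (-k - i c)` and `1 - z / (k - i c)`, written without
quotients by sums for shifts satisfying `k² + c² = k² c`. Division by zero makes it `1` at
`k = 0`. -/
noncomputable def pairFactor (k : ℕ) (c z : ℂ) : ℂ :=
  1 - 2 * Complex.I * z / (k : ℂ) ^ 2 - z ^ 2 / ((k : ℂ) ^ 2 * c)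

section PairFactor

variable {k : ℕ} {c : ℂ}

lemma pairFactor_eq_mul (hk : k ≠ 0) (hc : c ≠ 0)
    (hkc : (k : ℂ) ^ 2 + c ^ 2 = (k : ℂ) ^ 2 * c) (z : ℂ) :
    pairFactor k c z
      = (1 - z / (-(k : ℂ) - Complex.I * c)) * (1 - z / ((k : ℂ) - Complex.I * c)) := by
  have hk' : (k : ℂ) ≠ 0 := Nat.cast_ne_zero.mpr hk
  have hden : (-(k : ℂ) - Complex.I * c) * ((k : ℂ) - Complex.I * c) = -((k : ℂ) ^ 2 * c) := by
    linear_combination c ^ 2 * Complex.I_sq - hkc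
  have hprod : (-(k : ℂ) - Complex.I * c) * ((k : ℂ) - Complex.I * c) ≠ 0 := by
    rw [hden]
    exact neg_ne_zero.mpr (mul_ne_zero (pow_ne_zero 2 hk') hc)
  rw [one_sub_div (left_ne_zero_of_mul hprod), one_sub_div (right_ne_zero_of_mul hprod),
    div_mul_div_comm, hden, pairFactor]
  field_simp
  linear_combination c ^ 2 * Complex.I_sq - hkc

lemma norm_sq_sub_sq_eq_mul_norm_pairFactor (hk : k ≠ 0) (hc : c ≠ 0)
    (hkc : (k : ℂ) ^ 2 + c ^ 2 = (k : ℂ) ^ 2 * c) (z : ℂ) :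
    ‖(k : ℂ) ^ 2 - (z + Complex.I * c) ^ 2‖ = (k : ℝ) ^ 2 * ‖c‖ * ‖pairFactor k c z‖ := by
  have hk' : (k : ℂ) ≠ 0 := Nat.cast_ne_zero.mpr hk
  have heq : (k : ℂ) ^ 2 - (z + Complex.I * c) ^ 2 = (k : ℂ) ^ 2 * c * pairFactor k c z := by
    rw [pairFactor]
    field_simp
    linear_combination hkc - c ^ 2 * Complex.I_sq
  rw [heq, norm_mul, norm_mul, norm_pow, Complex.norm_natCast]

lemma norm_pairFactor_sub_one_le (hc : 1 ≤ ‖c‖) (z : ℂ) :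
    ‖pairFactor k c z - 1‖ ≤ (‖z‖ ^ 2 + 2 * ‖z‖) / (k : ℝ) ^ 2 := by
  have heq : pairFactor k c z - 1
      = -((2 * Complex.I * z + z ^ 2 / c) / (k : ℂ) ^ 2) := by
    rw [pairFactor, mul_comm ((k : ℂ) ^ 2), ← div_div]
    ring
  have hdiv : ‖z‖ ^ 2 / ‖c‖ ≤ ‖z‖ ^ 2 := div_le_self (by positivity) hc
  rw [heq, norm_neg, norm_div, norm_pow, Complex.norm_natCast]
  gcongr
  refine (norm_add_le _ _).trans ?_
  rw [norm_mul, norm_mul, norm_div, norm_pow, Complex.norm_I, Complex.norm_two]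
  linarith

lemma hasDerivAt_pairFactor (z : ℂ) :
    HasDerivAt (pairFactor k c)
      (-(2 * Complex.I / (k : ℂ) ^ 2) - 2 * z / ((k : ℂ) ^ 2 * c)) z := by
  have hlin := ((hasDerivAt_id z).const_mul (2 * Complex.I)).div_const ((k : ℂ) ^ 2)
  have hsq := ((hasDerivAt_id z).pow 2).div_const ((k : ℂ) ^ 2 * c)
  refine ((hlin.const_sub 1).sub hsq).congr_deriv ?_
  simp

lemma differentiable_pairFactor : Differentiable ℂ (pairFactor k c) := fun z =>
  (hasDerivAt_pairFactor z).differentiableAt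

lemma pairFactor_eq_zero_of_sq_eq (hk : k ≠ 0) (hc : c ≠ 0)
    (hkc : (k : ℂ) ^ 2 + c ^ 2 = (k : ℂ) ^ 2 * c) {κ : ℂ} (hκ : κ ^ 2 = (k : ℂ) ^ 2) :
    pairFactor k c (-κ - Complex.I * c) = 0 := by
  have hnorm := norm_sq_sub_sq_eq_mul_norm_pairFactor hk hc hkc (-κ - Complex.I * c)
  rw [sub_add_cancel, neg_sq, hκ, sub_self, norm_zero] at hnorm
  have hk' : (k : ℝ) ^ 2 * ‖c‖ ≠ 0 := by positivity
  exact norm_eq_zero.mp ((mul_eq_zero.mp hnorm.symm).resolve_left hk')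

lemma norm_deriv_pairFactor (hk : k ≠ 0) (hc : c ≠ 0) {κ : ℂ} (hκ : ‖κ‖ = k) :
    ‖deriv (pairFactor k c) (-κ - Complex.I * c)‖ = 2 / (k * ‖c‖) := by
  have hk' : (k : ℂ) ≠ 0 := Nat.cast_ne_zero.mpr hk
  have heq : -(2 * Complex.I / (k : ℂ) ^ 2) - 2 * (-κ - Complex.I * c) / ((k : ℂ) ^ 2 * c)
      = 2 * κ / ((k : ℂ) ^ 2 * c) := by
    field_simp
    ring
  rw [(hasDerivAt_pairFactor _).deriv, heq, norm_div, norm_mul, norm_mul, norm_pow,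
    Complex.norm_two, Complex.norm_natCast, hκ]
  field_simp

end PairFactor

lemma pairFactor_zero_left (c z : ℂ) : pairFactor 0 c z = 1 := by
  simp [pairFactor]

/-- The infinite product of the factors `pairFactor k (c k)` over the `k` outside `s`. -/
noncomputable def pairProduct (c : ℕ → ℂ) (s : Finset ℕ) (z : ℂ) : ℂ :=
  ∏' k : ℕ, if k ∈ s then 1 else pairFactor k (c k) z

section PairProduct

variable {c : ℕ → ℂ}

lemma norm_ite_pairFactor_sub_one_le (hc : ∀ k, 1 ≤ k → 1 ≤ ‖c k‖) (s : Finset ℕ) (k : ℕ) (z : ℂ) :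
    ‖(if k ∈ s then 1 else pairFactor k (c k) z) - 1‖ ≤ (‖z‖ ^ 2 + 2 * ‖z‖) / (k : ℝ) ^ 2 := by
  split_ifs with hks
  · rw [sub_self, norm_zero]
    positivity
  · rcases k.eq_zero_or_pos with rfl | hk
    · simp [pairFactor_zero_left]
    · exact norm_pairFactor_sub_one_le (hc k hk) z

lemma prod_Icc_sdiff_eq_prod_range_succ_ite (s : Finset ℕ) (N : ℕ) (z : ℂ) :
    ∏ k ∈ Finset.Icc 1 N \ s, pairFactor k (c k) z
      = ∏ k ∈ Finset.range (N + 1), if k ∈ s then 1 else pairFactor k (c k) z := by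
  refine Finset.prod_subset_one_on_sdiff (fun k hk => ?_) (fun k hk => ?_) fun k hk => ?_
  · simp only [Finset.mem_sdiff, Finset.mem_Icc] at hk
    exact Finset.mem_range.mpr (by omega)
  · simp only [Finset.mem_sdiff, Finset.mem_range, Finset.mem_Icc] at hk
    split_ifs with hks
    · rfl
    · rw [show k = 0 by by_contra h; exact hk.2 ⟨by omega, hks⟩, pairFactor_zero_left]
  · rw [if_neg (Finset.mem_sdiff.mp hk).2]

lemma continuous_ite_pairFactor (c : ℕ → ℂ) (s : Finset ℕ) (k : ℕ) :
    Continuous fun z => if k ∈ s then 1 else pairFactor k (c k) z :=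
  continuous_const.if_const _ differentiable_pairFactor.continuous

lemma tendstoLocallyUniformly_pairProduct (hc : ∀ k, 1 ≤ k → 1 ≤ ‖c k‖) (s : Finset ℕ) :
    TendstoLocallyUniformly (fun N z => ∏ k ∈ Finset.Icc 1 N \ s, pairFactor k (c k) z)
      (pairProduct c s) atTop := by
  have hrange := tendstoLocallyUniformly_prod_range_of_norm_sub_one_le
    (continuous_ite_pairFactor c s) (by fun_prop) (norm_ite_pairFactor_sub_one_le hc s)
  simp_rw [prod_Icc_sdiff_eq_prod_range_succ_ite]
  exact fun u hu z =>
    (hrange u hu z).imp fun t ht => ⟨ht.1, (tendsto_add_atTop_nat 1).eventually ht.2⟩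

lemma differentiable_pairProduct (hc : ∀ k, 1 ≤ k → 1 ≤ ‖c k‖) (s : Finset ℕ) :
    Differentiable ℂ (pairProduct c s) := by
  have hlim := tendstoLocallyUniformlyOn_univ.mpr (tendstoLocallyUniformly_pairProduct hc s)
  rw [← differentiableOn_univ]
  refine hlim.differentiableOn (Eventually.of_forall fun N => ?_) isOpen_univ
  exact (Differentiable.fun_finsetProd fun k _ => differentiable_pairFactor).differentiableOn

lemma tendsto_pairProduct (hc : ∀ k, 1 ≤ k → 1 ≤ ‖c k‖) (s : Finset ℕ) (z : ℂ) :
    Tendsto (fun N => ∏ k ∈ Finset.Icc 1 N \ s, pairFactor k (c k) z) atTop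
      (nhds (pairProduct c s z)) :=
  (tendstoLocallyUniformlyOn_univ.mpr
    (tendstoLocallyUniformly_pairProduct hc s)).tendsto_at (Set.mem_univ z)

lemma tendsto_norm_pairProduct (hc : ∀ k, 1 ≤ k → 1 ≤ ‖c k‖) (s : Finset ℕ) (z : ℂ) :
    Tendsto (fun N => ∏ k ∈ Finset.Icc 1 N \ s, ‖pairFactor k (c k) z‖) atTop
      (nhds ‖pairProduct c s z‖) := by
  simpa only [← norm_prod] using (tendsto_pairProduct hc s z).norm

lemma pairProduct_ne_zero (hc : ∀ k, 1 ≤ k → 1 ≤ ‖c k‖) {s : Finset ℕ} {z : ℂ}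
    (hz : ∀ k, 1 ≤ k → k ∉ s → pairFactor k (c k) z ≠ 0) : pairProduct c s z ≠ 0 := by
  refine tprod_ne_zero_of_norm_sub_one_le (fun k => ?_)
    fun k => norm_ite_pairFactor_sub_one_le hc s k z
  split_ifs with hks
  · exact one_ne_zero
  · rcases k.eq_zero_or_pos with rfl | hk
    · simp [pairFactor_zero_left]
    · exact hz k hk hks

lemma pairProduct_eq_pairFactor_mul (hc : ∀ k, 1 ≤ k → 1 ≤ ‖c k‖) {s : Finset ℕ} {n : ℕ}
    (hn : 1 ≤ n) (hns : n ∉ s) (z : ℂ) :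
    pairProduct c s z = pairFactor n (c n) z * pairProduct c (insert n s) z := by
  refine tendsto_nhds_unique (tendsto_pairProduct hc s z)
    (((tendsto_pairProduct hc (insert n s) z).const_mul _).congr' ?_)
  filter_upwards [eventually_ge_atTop n] with N hN
  rw [Finset.sdiff_insert, Finset.mul_prod_erase _ (fun k => pairFactor k (c k) z)]
  exact Finset.mem_sdiff.mpr ⟨Finset.mem_Icc.mpr ⟨hn, hN⟩, hns⟩

lemma le_norm_pairProduct (hc : ∀ k, 1 ≤ k → 1 ≤ ‖c k‖) {s : Finset ℕ} {z : ℂ} {b : ℝ}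
    (hb : ∀ᶠ N in atTop, b ≤ ∏ k ∈ Finset.Icc 1 N \ s, ‖pairFactor k (c k) z‖) :
    b ≤ ‖pairProduct c s z‖ :=
  ge_of_tendsto (tendsto_norm_pairProduct hc s z) hb

lemma norm_pairProduct_le (hc : ∀ k, 1 ≤ k → 1 ≤ ‖c k‖) {s : Finset ℕ} {z : ℂ} {b : ℝ}
    (hb : ∀ᶠ N in atTop, ∏ k ∈ Finset.Icc 1 N \ s, ‖pairFactor k (c k) z‖ ≤ b) :
    ‖pairProduct c s z‖ ≤ b :=
  le_of_tendsto (tendsto_norm_pairProduct hc s z) hb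

end PairProduct

/-! ### The canonical product -/

/-- The shift `a_k` in `i λ_{±k}⁺ = ∓k - i a_k`. -/
noncomputable def shiftP (k : ℕ) : ℂ :=
  ((k : ℂ) ^ 2 - ((k : ℂ) ^ 4 - 4 * (k : ℂ) ^ 2) ^ ((1 : ℂ) / 2)) / 2

/-- The shift `b_k` in `i λ_{±k}⁻ = ∓k - i b_k`. -/
noncomputable def shiftM (k : ℕ) : ℂ :=
  ((k : ℂ) ^ 2 + ((k : ℂ) ^ 4 - 4 * (k : ℂ) ^ 2) ^ ((1 : ℂ) / 2)) / 2

lemma natAbs_cast_sq (k : ℤ) : ((k.natAbs : ℕ) : ℂ) ^ 2 = (k : ℂ) ^ 2 := by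
  rw [← Int.cast_natCast (R := ℂ) k.natAbs, ← Int.cast_pow, Int.natAbs_sq, Int.cast_pow]

lemma I_mul_lamP (k : ℤ) : Complex.I * lamP k = -(k : ℂ) - Complex.I * shiftP k.natAbs := by
  rw [lamP, shiftP, show 4 = 2 * 2 from rfl, pow_mul, pow_mul, natAbs_cast_sq]
  linear_combination (k : ℂ) * Complex.I_sq

lemma I_mul_lamM (k : ℤ) : Complex.I * lamM k = -(k : ℂ) - Complex.I * shiftM k.natAbs := by
  rw [lamM, shiftM, show 4 = 2 * 2 from rfl, pow_mul, pow_mul, natAbs_cast_sq]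
  linear_combination (k : ℂ) * Complex.I_sq

lemma shiftP_add_shiftM (k : ℕ) : shiftP k + shiftM k = (k : ℂ) ^ 2 := by
  rw [shiftP, shiftM]
  ring

lemma shiftP_mul_shiftM (k : ℕ) : shiftP k * shiftM k = (k : ℂ) ^ 2 := by
  have hsq : (((k : ℂ) ^ 4 - 4 * (k : ℂ) ^ 2) ^ ((1 : ℂ) / 2)) ^ 2
      = (k : ℂ) ^ 4 - 4 * (k : ℂ) ^ 2 := by
    rw [one_div]
    exact Complex.cpow_ofNat_inv_pow _ 2
  rw [shiftP, shiftM]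
  linear_combination -hsq / 4

lemma shiftP_sq (k : ℕ) : shiftP k ^ 2 = (k : ℂ) ^ 2 * (shiftP k - 1) := by
  linear_combination shiftP k * shiftP_add_shiftM k - shiftP_mul_shiftM k

lemma shiftM_sq (k : ℕ) : shiftM k ^ 2 = (k : ℂ) ^ 2 * (shiftM k - 1) := by
  linear_combination shiftM k * shiftP_add_shiftM k - shiftP_mul_shiftM k

lemma exists_real_shifts {k : ℕ} (hk : 2 ≤ k) :
    ∃ α β : ℝ, shiftP k = α ∧ shiftM k = β ∧ 1 ≤ α ∧ α ≤ 2 ∧ α + β = (k : ℝ) ^ 2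
      ∧ α * β = (k : ℝ) ^ 2 := by
  have hk2 : (4 : ℝ) ≤ (k : ℝ) ^ 2 := by exact_mod_cast Nat.pow_le_pow_left hk 2
  have hroot : ((k : ℂ) ^ 4 - 4 * (k : ℂ) ^ 2) ^ ((1 : ℂ) / 2)
      = (√((k : ℝ) ^ 4 - 4 * (k : ℝ) ^ 2) : ℝ) := by
    rw [sqrt_eq_rpow, Complex.ofReal_cpow (by nlinarith)]
    push_cast
    rfl
  set s := √((k : ℝ) ^ 4 - 4 * (k : ℝ) ^ 2)
  have hP : shiftP k = ((((k : ℝ) ^ 2 - s) / 2 : ℝ) : ℂ) := by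
    rw [shiftP, hroot]
    push_cast
    rfl
  have hM : shiftM k = ((((k : ℝ) ^ 2 + s) / 2 : ℝ) : ℂ) := by
    rw [shiftM, hroot]
    push_cast
    rfl
  have hadd := shiftP_add_shiftM k
  have hmul := shiftP_mul_shiftM k
  rw [hP, hM] at hadd hmul
  set α := ((k : ℝ) ^ 2 - s) / 2
  set β := ((k : ℝ) ^ 2 + s) / 2 with hβ
  norm_cast at hadd hmul
  have hβ2 : 2 ≤ β := by linarith [sqrt_nonneg ((k : ℝ) ^ 4 - 4 * (k : ℝ) ^ 2)]
  exact ⟨α, β, hP, hM, by nlinarith, by nlinarith, by exact_mod_cast hadd,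
    by exact_mod_cast hmul⟩

lemma norm_eq_one_of_sq_eq_sub_one {c : ℂ} (hc : c ^ 2 = c - 1) : ‖c‖ = 1 := by
  have hcube : c ^ 3 = -1 := by linear_combination (c + 1) * hc
  have hnorm : ‖c‖ ^ 3 = 1 := by rw [← norm_pow, hcube, norm_neg, norm_one]
  exact (pow_eq_one_iff_of_nonneg (norm_nonneg c) three_ne_zero).mp hnorm

lemma re_eq_half_of_sq_eq_sub_one {c : ℂ} (hc : c ^ 2 = c - 1) : c.re = 1 / 2 := by
  have hre := congrArg Complex.re hc
  have him := congrArg Complex.im hc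
  simp only [sq, Complex.mul_re, Complex.mul_im, Complex.sub_re, Complex.sub_im, Complex.one_re,
    Complex.one_im] at hre him
  have hfac : c.im * (2 * c.re - 1) = 0 := by linarith
  rcases mul_eq_zero.mp hfac with h | h
  · rw [h] at hre
    nlinarith [sq_nonneg (2 * c.re - 1)]
  · linarith

lemma shiftP_one_sq : shiftP 1 ^ 2 = shiftP 1 - 1 := by simpa using shiftP_sq 1

lemma shiftM_one_sq : shiftM 1 ^ 2 = shiftM 1 - 1 := by simpa using shiftM_sq 1

lemma one_le_norm_shiftP {k : ℕ} (hk : 1 ≤ k) : 1 ≤ ‖shiftP k‖ := by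
  rcases hk.eq_or_lt with rfl | hk
  · exact (norm_eq_one_of_sq_eq_sub_one shiftP_one_sq).ge
  · obtain ⟨α, -, hα, -, hα1, -⟩ := exists_real_shifts hk
    rwa [hα, Complex.norm_real, norm_of_nonneg (by linarith)]

lemma norm_shiftP_le_two {k : ℕ} (hk : 1 ≤ k) : ‖shiftP k‖ ≤ 2 := by
  rcases hk.eq_or_lt with rfl | hk
  · rw [norm_eq_one_of_sq_eq_sub_one shiftP_one_sq]
    exact one_le_two
  · obtain ⟨α, -, hα, -, hα1, hα2, -⟩ := exists_real_shifts hk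
    rwa [hα, Complex.norm_real, norm_of_nonneg (by linarith)]

lemma one_le_norm_shiftM {k : ℕ} (hk : 1 ≤ k) : 1 ≤ ‖shiftM k‖ := by
  rcases hk.eq_or_lt with rfl | hk
  · exact (norm_eq_one_of_sq_eq_sub_one shiftM_one_sq).ge
  · obtain ⟨α, β, -, hβ, -, hα2, hadd, -⟩ := exists_real_shifts hk
    have hk2 : (4 : ℝ) ≤ (k : ℝ) ^ 2 := by exact_mod_cast Nat.pow_le_pow_left hk 2
    rw [hβ, Complex.norm_real, norm_of_nonneg (by linarith)]
    linarith

lemma norm_shiftM_le {k : ℕ} (hk : 1 ≤ k) : ‖shiftM k‖ ≤ (k : ℝ) ^ 2 := by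
  have hmul : ‖shiftP k‖ * ‖shiftM k‖ = (k : ℝ) ^ 2 := by
    rw [← norm_mul, shiftP_mul_shiftM, norm_pow, Complex.norm_natCast]
  rw [← hmul]
  exact le_mul_of_one_le_left (norm_nonneg _) (one_le_norm_shiftP hk)

lemma norm_shiftP_sub_one_le {k : ℕ} (hk : 1 ≤ k) : ‖shiftP k - 1‖ ≤ 4 / (k : ℝ) ^ 2 := by
  have hk0 : (0 : ℝ) < k := by exact_mod_cast hk
  have hsq : ‖shiftP k‖ ^ 2 = (k : ℝ) ^ 2 * ‖shiftP k - 1‖ := by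
    rw [← norm_pow, shiftP_sq, norm_mul, norm_pow, Complex.norm_natCast]
  rw [le_div_iff₀' (by positivity), ← hsq]
  nlinarith [norm_shiftP_le_two hk, norm_nonneg (shiftP k)]

lemma shiftP_ne_zero {k : ℕ} (hk : 1 ≤ k) : shiftP k ≠ 0 :=
  norm_pos_iff.mp (zero_lt_one.trans_le (one_le_norm_shiftP hk))

lemma shiftM_ne_zero {k : ℕ} (hk : 1 ≤ k) : shiftM k ≠ 0 :=
  norm_pos_iff.mp (zero_lt_one.trans_le (one_le_norm_shiftM hk))

lemma sq_add_shiftP_sq (k : ℕ) : (k : ℂ) ^ 2 + shiftP k ^ 2 = (k : ℂ) ^ 2 * shiftP k := by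
  linear_combination shiftP_sq k

lemma sq_add_shiftM_sq (k : ℕ) : (k : ℂ) ^ 2 + shiftM k ^ 2 = (k : ℂ) ^ 2 * shiftM k := by
  linear_combination shiftM_sq k

lemma pairFactor_shiftP_eq {k : ℕ} (hk : 1 ≤ k) (z : ℂ) :
    pairFactor k (shiftP k) z
      = (1 - z / (Complex.I * lamP k)) * (1 - z / (Complex.I * lamP (-k))) := by
  rw [pairFactor_eq_mul (by omega) (shiftP_ne_zero hk) (sq_add_shiftP_sq k), I_mul_lamP,
    I_mul_lamP]
  simp

lemma pairFactor_shiftM_eq {k : ℕ} (hk : 1 ≤ k) (z : ℂ) :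
    pairFactor k (shiftM k) z
      = (1 - z / (Complex.I * lamM k)) * (1 - z / (Complex.I * lamM (-k))) := by
  rw [pairFactor_eq_mul (by omega) (shiftM_ne_zero hk) (sq_add_shiftM_sq k), I_mul_lamM,
    I_mul_lamM]
  simp

lemma prod_Icc_neg_sdiff_eq {M : Type*} [CommMonoid M] (f : ℤ → M) (N : ℕ) :
    ∏ k ∈ Finset.Icc (-(N : ℤ)) N \ {0, 2, -2}, f k
      = ∏ k ∈ Finset.Icc 1 N \ {2}, f k * f (-k) := by
  induction N with
  | zero =>
    have hempty : Finset.Icc (-((0 : ℕ) : ℤ)) ((0 : ℕ) : ℤ) \ {0, 2, -2} = ∅ := by decide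
    rw [hempty, Finset.prod_empty]
    rfl
  | succ N ih =>
    by_cases hN : N = 1
    · subst hN
      exact ih
    · have hint : Finset.Icc (-((N + 1 : ℕ) : ℤ)) ((N + 1 : ℕ) : ℤ) \ {0, 2, -2}
          = insert ((N + 1 : ℕ) : ℤ) (insert (-((N + 1 : ℕ) : ℤ))
              (Finset.Icc (-(N : ℤ)) N \ {0, 2, -2})) := by
        ext k
        simp only [Finset.mem_sdiff, Finset.mem_Icc, Finset.mem_insert, Finset.mem_singleton]
        omega
      have hnat : Finset.Icc 1 (N + 1) \ {2} = insert (N + 1) (Finset.Icc 1 N \ {2}) := by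
        ext k
        simp only [Finset.mem_sdiff, Finset.mem_Icc, Finset.mem_insert, Finset.mem_singleton]
        omega
      rw [hint, hnat, Finset.prod_insert, Finset.prod_insert, Finset.prod_insert, ih, mul_assoc]
      all_goals
        simp only [Finset.mem_insert, Finset.mem_sdiff, Finset.mem_Icc]
        omega

lemma Ppartial_eq_prod_pairFactor {N : ℕ} (hN : 2 ≤ N) (z : ℂ) :
    Ppartial N z = z * (∏ k ∈ Finset.Icc 1 N \ ∅, pairFactor k (shiftP k) z)
      * ∏ k ∈ Finset.Icc 1 N \ {2}, pairFactor k (shiftM k) z := by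
  have hP : ∏ k ∈ Finset.Icc 1 N \ {2}, pairFactor k (shiftP k) z
      = ∏ k ∈ Finset.Icc 1 N \ {2},
        (1 - z / (Complex.I * lamP k)) * (1 - z / (Complex.I * lamP (-k))) :=
    Finset.prod_congr rfl fun k hk =>
      pairFactor_shiftP_eq (Finset.mem_Icc.mp (Finset.mem_sdiff.mp hk).1).1 z
  have hM : ∏ k ∈ Finset.Icc 1 N \ {2}, pairFactor k (shiftM k) z
      = ∏ k ∈ Finset.Icc 1 N \ {2},
        (1 - z / (Complex.I * lamM k)) * (1 - z / (Complex.I * lamM (-k))) :=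
    Finset.prod_congr rfl fun k hk =>
      pairFactor_shiftM_eq (Finset.mem_Icc.mp (Finset.mem_sdiff.mp hk).1).1 z
  have htwo : ∏ k ∈ Finset.Icc 1 N \ ∅, pairFactor k (shiftP k) z
      = pairFactor 2 (shiftP 2) z * ∏ k ∈ Finset.Icc 1 N \ {2}, pairFactor k (shiftP k) z := by
    rw [Finset.sdiff_empty, Finset.sdiff_singleton_eq_erase,
      Finset.mul_prod_erase _ (fun k => pairFactor k (shiftP k) z)
        (Finset.mem_Icc.mpr ⟨one_le_two, hN⟩)]
  rw [htwo, pairFactor_shiftP_eq one_le_two, hP, hM,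
    ← prod_Icc_neg_sdiff_eq fun k => 1 - z / (Complex.I * lamP k),
    ← prod_Icc_neg_sdiff_eq fun k => 1 - z / (Complex.I * lamM k), Ppartial]
  push_cast
  ring

/-- The canonical product `P`, with the zeros `i λ_{±k}^±` of each branch grouped in pairs. -/
noncomputable def canonicalProduct (z : ℂ) : ℂ :=
  z * pairProduct shiftP ∅ z * pairProduct shiftM {2} z

lemma differentiable_pairProduct_shiftP (s : Finset ℕ) : Differentiable ℂ (pairProduct shiftP s) :=
  differentiable_pairProduct (fun _ => one_le_norm_shiftP) s

lemma differentiable_pairProduct_shiftM (s : Finset ℕ) : Differentiable ℂ (pairProduct shiftM s) :=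
  differentiable_pairProduct (fun _ => one_le_norm_shiftM) s

lemma differentiable_canonicalProduct : Differentiable ℂ canonicalProduct :=
  (differentiable_id.mul (differentiable_pairProduct_shiftP ∅)).mul
    (differentiable_pairProduct_shiftM {2})

lemma tendstoLocallyUniformly_Ppartial :
    TendstoLocallyUniformly Ppartial canonicalProduct atTop := by
  have hid : TendstoLocallyUniformly (fun (_ : ℕ) (z : ℂ) => z) (fun z => z) atTop :=
    fun u hu _ => ⟨Set.univ, univ_mem, Eventually.of_forall fun _ _ _ => refl_mem_uniformity hu⟩
  have hcP := (differentiable_pairProduct_shiftP ∅).continuous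
  have hcM := (differentiable_pairProduct_shiftM {2}).continuous
  have hlim := (hid.mul₀ (tendstoLocallyUniformly_pairProduct (fun _ => one_le_norm_shiftP) ∅)
    continuous_id hcP).mul₀ (tendstoLocallyUniformly_pairProduct (fun _ => one_le_norm_shiftM) {2})
    (continuous_id.mul hcP) hcM
  refine hlim.congr_inseparable ?_
  filter_upwards [eventually_ge_atTop 2] with N hN z
  exact .of_eq (Ppartial_eq_prod_pairFactor hN z).symm

lemma norm_eq_of_sq_eq_natCast_sq {n : ℕ} {κ : ℂ} (hκ : κ ^ 2 = (n : ℂ) ^ 2) : ‖κ‖ = n := by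
  rcases sq_eq_sq_iff_eq_or_eq_neg.mp hκ with rfl | rfl
  · exact Complex.norm_natCast n
  · rw [norm_neg, Complex.norm_natCast]

lemma norm_deriv_canonicalProduct_shiftP {n : ℕ} (hn : 1 ≤ n) {κ w : ℂ}
    (hκ : κ ^ 2 = (n : ℂ) ^ 2) (hw : w = -κ - Complex.I * shiftP n) :
    ‖deriv canonicalProduct w‖
      = 2 / (n * ‖shiftP n‖) * ‖w‖ * ‖pairProduct shiftP {n} w‖ * ‖pairProduct shiftM {2} w‖ := by
  have hsplit : canonicalProduct = fun z =>
      pairFactor n (shiftP n) z * (z * pairProduct shiftP {n} z * pairProduct shiftM {2} z) := by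
    funext z
    rw [canonicalProduct, pairProduct_eq_pairFactor_mul (fun _ => one_le_norm_shiftP) hn
      (Finset.notMem_empty n), insert_empty_eq]
    ring
  have hrest : Differentiable ℂ fun z =>
      z * pairProduct shiftP {n} z * pairProduct shiftM {2} z :=
    (differentiable_id.mul (differentiable_pairProduct_shiftP {n})).mul
      (differentiable_pairProduct_shiftM {2})
  have hzero : pairFactor n (shiftP n) w = 0 := by
    rw [hw, pairFactor_eq_zero_of_sq_eq (by omega) (shiftP_ne_zero hn) (sq_add_shiftP_sq n) hκ]
  rw [hsplit, deriv_mul_of_eq_zero (differentiable_pairFactor w) (hrest w) hzero, norm_mul,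
    norm_mul, norm_mul, hw, norm_deriv_pairFactor (by omega) (shiftP_ne_zero hn)
      (norm_eq_of_sq_eq_natCast_sq hκ)]
  ring

lemma norm_deriv_canonicalProduct_shiftM {n : ℕ} (hn : 1 ≤ n) (hn2 : n ≠ 2) {κ w : ℂ}
    (hκ : κ ^ 2 = (n : ℂ) ^ 2) (hw : w = -κ - Complex.I * shiftM n) :
    ‖deriv canonicalProduct w‖
      = 2 / (n * ‖shiftM n‖) * ‖w‖ * ‖pairProduct shiftP ∅ w‖
        * ‖pairProduct shiftM {n, 2} w‖ := by
  have hsplit : canonicalProduct = fun z =>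
      pairFactor n (shiftM n) z * (z * pairProduct shiftP ∅ z * pairProduct shiftM {n, 2} z) := by
    funext z
    rw [canonicalProduct, pairProduct_eq_pairFactor_mul (fun _ => one_le_norm_shiftM) hn
      (Finset.notMem_singleton.mpr hn2)]
    ring
  have hrest : Differentiable ℂ fun z =>
      z * pairProduct shiftP ∅ z * pairProduct shiftM {n, 2} z :=
    (differentiable_id.mul (differentiable_pairProduct_shiftP ∅)).mul
      (differentiable_pairProduct_shiftM {n, 2})
  have hzero : pairFactor n (shiftM n) w = 0 := by
    rw [hw, pairFactor_eq_zero_of_sq_eq (by omega) (shiftM_ne_zero hn) (sq_add_shiftM_sq n) hκ]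
  rw [hsplit, deriv_mul_of_eq_zero (differentiable_pairFactor w) (hrest w) hzero, norm_mul,
    norm_mul, norm_mul, hw, norm_deriv_pairFactor (by omega) (shiftM_ne_zero hn)
      (norm_eq_of_sq_eq_natCast_sq hκ)]
  ring

/-! ### Upper bounds -/

lemma norm_sq_sub_sq_le_of_norm_sub_le {u v : ℂ} {δ : ℝ} (hv : 1 ≤ |v.im|) (huv : ‖u - v‖ ≤ δ)
    (k : ℕ) : ‖(k : ℂ) ^ 2 - u ^ 2‖ ≤ (1 + δ) ^ 2 * ‖(k : ℂ) ^ 2 - v ^ 2‖ := by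
  have hδ : 0 ≤ δ := (norm_nonneg _).trans huv
  have hone_sub : 1 ≤ ‖(k : ℂ) - v‖ := by
    refine hv.trans ?_
    simpa using Complex.abs_im_le_norm ((k : ℂ) - v)
  have hone_add : 1 ≤ ‖(k : ℂ) + v‖ := by
    refine hv.trans ?_
    simpa using Complex.abs_im_le_norm ((k : ℂ) + v)
  have hsub : ‖(k : ℂ) - u‖ ≤ (1 + δ) * ‖(k : ℂ) - v‖ := by
    have htri := norm_add_le ((k : ℂ) - v) (v - u)
    rw [sub_add_sub_cancel, norm_sub_rev v u] at htri
    nlinarith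
  have hadd : ‖(k : ℂ) + u‖ ≤ (1 + δ) * ‖(k : ℂ) + v‖ := by
    have htri := norm_add_le ((k : ℂ) + v) (u - v)
    rw [add_add_sub_cancel] at htri
    nlinarith
  calc ‖(k : ℂ) ^ 2 - u ^ 2‖ = ‖(k : ℂ) + u‖ * ‖(k : ℂ) - u‖ := by rw [sq_sub_sq, norm_mul]
    _ ≤ (1 + δ) * ‖(k : ℂ) + v‖ * ((1 + δ) * ‖(k : ℂ) - v‖) := by gcongr
    _ = (1 + δ) ^ 2 * ‖(k : ℂ) ^ 2 - v ^ 2‖ := by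
      rw [sq_sub_sq, norm_mul]
      ring

lemma one_add_div_sq_pow_le_exp {C : ℝ} (hC : 0 ≤ C) (m k : ℕ) :
    (1 + C / (k : ℝ) ^ 2) ^ m ≤ exp (m * C / (k : ℝ) ^ 2) := by
  rw [mul_div_assoc, exp_nat_mul]
  gcongr
  linarith [add_one_le_exp (C / (k : ℝ) ^ 2)]

lemma norm_natCast_sq_sub_sq {k : ℕ} (hk : k ≠ 0) (v : ℂ) :
    ‖(k : ℂ) ^ 2 - v ^ 2‖ = (k : ℝ) ^ 2 * ‖1 - v ^ 2 / (k : ℂ) ^ 2‖ := by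
  have hk' : (k : ℂ) ≠ 0 := Nat.cast_ne_zero.mpr hk
  rw [← Complex.norm_natCast k, ← norm_pow, ← norm_mul, mul_sub, mul_one,
    mul_div_cancel₀ _ (pow_ne_zero 2 hk')]

lemma norm_pairFactor_le_mul_norm_one_sub {k : ℕ} (hk : k ≠ 0) {c z : ℂ} (hc : 1 ≤ ‖c‖)
    (hkc : (k : ℂ) ^ 2 + c ^ 2 = (k : ℂ) ^ 2 * c) (hz : 1 ≤ |(z + Complex.I).im|) :
    ‖pairFactor k c z‖ ≤ (1 + ‖c - 1‖) ^ 2 * ‖1 - (z + Complex.I) ^ 2 / (k : ℂ) ^ 2‖ := by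
  have hc0 : c ≠ 0 := norm_pos_iff.mp (zero_lt_one.trans_le hc)
  have hdist : ‖z + Complex.I * c - (z + Complex.I)‖ ≤ ‖c - 1‖ := by
    rw [add_sub_add_left_eq_sub, ← mul_sub_one, norm_mul, Complex.norm_I, one_mul]
  have hle := norm_sq_sub_sq_le_of_norm_sub_le hz hdist k
  rw [norm_sq_sub_sq_eq_mul_norm_pairFactor hk hc0 hkc, norm_natCast_sq_sub_sq hk] at hle
  have hk2 : 0 < (k : ℝ) ^ 2 := by positivity
  refine le_of_mul_le_mul_left ?_ hk2
  calc (k : ℝ) ^ 2 * ‖pairFactor k c z‖ ≤ (k : ℝ) ^ 2 * ‖c‖ * ‖pairFactor k c z‖ := by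
        gcongr
        exact le_mul_of_one_le_right hk2.le hc
    _ ≤ _ := hle
    _ = _ := by ring

lemma norm_pairProduct_le_exp {c : ℕ → ℂ} (hc : ∀ k, 1 ≤ k → 1 ≤ ‖c k‖) (s : Finset ℕ) (z : ℂ) :
    ‖pairProduct c s z‖ ≤ exp (π * (‖z‖ + 1)) := by
  have hfactor (k : ℕ) (hk : 1 ≤ k) :
      ‖pairFactor k (c k) z‖ ≤ 1 + (‖z‖ + 1) ^ 2 / (k : ℝ) ^ 2 := by
    have htri := norm_add_le 1 (pairFactor k (c k) z - 1)
    rw [add_sub_cancel, norm_one] at htri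
    refine htri.trans ?_
    gcongr
    refine (norm_pairFactor_sub_one_le (hc k hk) z).trans ?_
    gcongr
    linarith
  refine norm_pairProduct_le hc (Eventually.of_forall fun N => ?_)
  calc ∏ k ∈ Finset.Icc 1 N \ s, ‖pairFactor k (c k) z‖
      ≤ ∏ k ∈ Finset.Icc 1 N \ s, (1 + (‖z‖ + 1) ^ 2 / (k : ℝ) ^ 2) :=
        Finset.prod_le_prod (fun k _ => norm_nonneg _) fun k hk =>
          hfactor k (Finset.mem_Icc.mp (Finset.mem_sdiff.mp hk).1).1
    _ ≤ ∏ k ∈ Finset.Icc 1 N, (1 + (‖z‖ + 1) ^ 2 / (k : ℝ) ^ 2) :=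
        Finset.prod_le_prod_of_subset_of_one_le Finset.sdiff_subset (fun k _ => by positivity)
          fun k _ _ => le_add_of_nonneg_right (by positivity)
    _ ≤ exp (π * (‖z‖ + 1)) :=
        prod_one_add_sq_div_sq_le (le_add_of_nonneg_left (norm_nonneg z)) N

lemma pairFactor_shiftM_eq_sub {k : ℕ} (hk : 1 ≤ k) (z : ℂ) :
    pairFactor k (shiftM k) z
      = (1 - Complex.I * z / (k : ℂ) ^ 2) ^ 2 - (shiftP k - 1) * (z / (k : ℂ) ^ 2) ^ 2 := by
  have hk' : (k : ℂ) ≠ 0 := Nat.cast_ne_zero.mpr (by omega)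
  have hM := shiftM_ne_zero hk
  rw [pairFactor]
  field_simp
  linear_combination z ^ 2 * shiftP_mul_shiftM k - z ^ 2 * shiftM k * Complex.I_sq

lemma norm_pairProduct_shiftM_le (s : Finset ℕ) (z : ℂ) :
    ‖pairProduct shiftM s z‖ ≤ exp (2 * π * √(2 * ‖z‖ + 1)) := by
  have hfactor (k : ℕ) (hk : 1 ≤ k) :
      ‖pairFactor k (shiftM k) z‖ ≤ (1 + √(2 * ‖z‖ + 1) ^ 2 / (k : ℝ) ^ 2) ^ 2 := by
    have hP : ‖shiftP k - 1‖ ≤ 3 := by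
      have htri := norm_sub_le (shiftP k) 1
      rw [norm_one] at htri
      linarith [norm_shiftP_le_two hk]
    have hsub : ‖1 - Complex.I * z / (k : ℂ) ^ 2‖ ≤ 1 + ‖z‖ / (k : ℝ) ^ 2 := by
      refine (norm_sub_le _ _).trans_eq ?_
      rw [norm_one, norm_div, norm_mul, Complex.norm_I, one_mul, norm_pow, Complex.norm_natCast]
    calc ‖pairFactor k (shiftM k) z‖
        ≤ ‖1 - Complex.I * z / (k : ℂ) ^ 2‖ ^ 2
            + ‖shiftP k - 1‖ * (‖z‖ / (k : ℝ) ^ 2) ^ 2 := by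
          rw [pairFactor_shiftM_eq_sub hk]
          refine (norm_sub_le _ _).trans_eq ?_
          rw [norm_pow, norm_mul, norm_pow, norm_div, norm_pow, Complex.norm_natCast]
      _ ≤ (1 + ‖z‖ / (k : ℝ) ^ 2) ^ 2 + 3 * (‖z‖ / (k : ℝ) ^ 2) ^ 2 := by gcongr
      _ ≤ (1 + 2 * (‖z‖ / (k : ℝ) ^ 2)) ^ 2 := by
          nlinarith [show 0 ≤ ‖z‖ / (k : ℝ) ^ 2 by positivity]
      _ ≤ (1 + √(2 * ‖z‖ + 1) ^ 2 / (k : ℝ) ^ 2) ^ 2 := by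
          rw [sq_sqrt (by positivity), ← mul_div_assoc]
          gcongr
          linarith
  refine norm_pairProduct_le (fun _ => one_le_norm_shiftM) (Eventually.of_forall fun N => ?_)
  calc ∏ k ∈ Finset.Icc 1 N \ s, ‖pairFactor k (shiftM k) z‖
      ≤ ∏ k ∈ Finset.Icc 1 N \ s, (1 + √(2 * ‖z‖ + 1) ^ 2 / (k : ℝ) ^ 2) ^ 2 :=
        Finset.prod_le_prod (fun k _ => norm_nonneg _) fun k hk =>
          hfactor k (Finset.mem_Icc.mp (Finset.mem_sdiff.mp hk).1).1
    _ ≤ ∏ k ∈ Finset.Icc 1 N, (1 + √(2 * ‖z‖ + 1) ^ 2 / (k : ℝ) ^ 2) ^ 2 :=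
        Finset.prod_le_prod_of_subset_of_one_le Finset.sdiff_subset (fun k _ => by positivity)
          fun k _ _ => one_le_pow₀ (le_add_of_nonneg_right (by positivity))
    _ ≤ exp (π * √(2 * ‖z‖ + 1)) ^ 2 := by
        rw [Finset.prod_pow]
        gcongr
        exact prod_one_add_sq_div_sq_le (one_le_sqrt.mpr (by linarith [norm_nonneg z])) N
    _ = exp (2 * π * √(2 * ‖z‖ + 1)) := by
        rw [← exp_nat_mul, mul_assoc]
        norm_num

lemma exists_norm_canonicalProduct_le_exp {ε : ℝ} (hε : 0 < ε) :
    ∃ C > 0, ∀ z, ‖canonicalProduct z‖ ≤ C * exp ((π + ε) * ‖z‖) := by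
  refine ⟨2 / ε * exp (π + ε / 4 + 4 * π ^ 2 / ε), by positivity, fun z => ?_⟩
  have hlin : ‖z‖ ≤ 2 / ε * exp (ε / 2 * ‖z‖) := by
    have hexp : ε / 2 * ‖z‖ ≤ exp (ε / 2 * ‖z‖) := by
      linarith [add_one_le_exp (ε / 2 * ‖z‖)]
    calc ‖z‖ = 2 / ε * (ε / 2 * ‖z‖) := by field_simp
      _ ≤ 2 / ε * exp (ε / 2 * ‖z‖) := by gcongr
  -- AM-GM: `2 π s ≤ ε s² / 4 + 4 π² / ε` at `s = √(2 ‖z‖ + 1)`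
  have hamgm : 2 * π * √(2 * ‖z‖ + 1) ≤ ε / 2 * ‖z‖ + ε / 4 + 4 * π ^ 2 / ε := by
    have hs : √(2 * ‖z‖ + 1) ^ 2 = 2 * ‖z‖ + 1 := sq_sqrt (by positivity)
    have hsq : ε / 2 * ‖z‖ + ε / 4 + 4 * π ^ 2 / ε - 2 * π * √(2 * ‖z‖ + 1)
        = ε * (√(2 * ‖z‖ + 1) / 2 - 2 * π / ε) ^ 2 := by
      field_simp
      linear_combination (-4 * ε ^ 2) * hs
    nlinarith [mul_nonneg hε.le (sq_nonneg (√(2 * ‖z‖ + 1) / 2 - 2 * π / ε))]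
  calc ‖canonicalProduct z‖
      = ‖z‖ * ‖pairProduct shiftP ∅ z‖ * ‖pairProduct shiftM {2} z‖ := by
        rw [canonicalProduct, norm_mul, norm_mul]
    _ ≤ 2 / ε * exp (ε / 2 * ‖z‖) * exp (π * (‖z‖ + 1))
          * exp (ε / 2 * ‖z‖ + ε / 4 + 4 * π ^ 2 / ε) := by
        gcongr
        · exact norm_pairProduct_le_exp (fun _ => one_le_norm_shiftP) ∅ z
        · exact (norm_pairProduct_shiftM_le {2} z).trans (exp_le_exp.mpr hamgm)
    _ = 2 / ε * exp (π + ε / 4 + 4 * π ^ 2 / ε) * exp ((π + ε) * ‖z‖) := by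
        simp only [mul_assoc, ← exp_add]
        ring_nf

lemma norm_pairProduct_shiftP_le {z : ℂ} (hz : 1 ≤ |(z + Complex.I).im|) :
    ‖pairProduct shiftP ∅ z‖
      ≤ exp 16 * (exp (π * |(z + Complex.I).im|) / ‖z + Complex.I‖) := by
  have hz0 : z + Complex.I ≠ 0 := by
    intro h
    rw [h, Complex.zero_im, abs_zero] at hz
    linarith
  have hfactor (k : ℕ) (hk : 1 ≤ k) : ‖pairFactor k (shiftP k) z‖
      ≤ exp (8 / (k : ℝ) ^ 2) * ‖1 - (z + Complex.I) ^ 2 / (k : ℂ) ^ 2‖ := by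
    refine (norm_pairFactor_le_mul_norm_one_sub (by omega) (one_le_norm_shiftP hk)
      (sq_add_shiftP_sq k) hz).trans ?_
    gcongr
    calc (1 + ‖shiftP k - 1‖) ^ 2 ≤ (1 + 4 / (k : ℝ) ^ 2) ^ 2 := by
          gcongr
          exact norm_shiftP_sub_one_le hk
      _ ≤ exp ((2 : ℕ) * 4 / (k : ℝ) ^ 2) := one_add_div_sq_pow_le_exp (by norm_num) 2 k
      _ = exp (8 / (k : ℝ) ^ 2) := by norm_num
  refine norm_pairProduct_le (fun _ => one_le_norm_shiftP) ?_
  filter_upwards [eventually_prod_norm_one_sub_sq_div_sq_le hz0] with N hN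
  calc ∏ k ∈ Finset.Icc 1 N \ ∅, ‖pairFactor k (shiftP k) z‖
      ≤ exp (2 * 8) * ∏ k ∈ Finset.Icc 1 N, ‖1 - (z + Complex.I) ^ 2 / (k : ℂ) ^ 2‖ := by
        rw [Finset.sdiff_empty]
        exact prod_le_exp_mul_prod (by norm_num) _ (fun k _ => norm_nonneg _)
          fun k hk => hfactor k (Finset.mem_Icc.mp hk).1
    _ ≤ exp 16 * (exp (π * |(z + Complex.I).im|) / ‖z + Complex.I‖) := by
        norm_num1
        gcongr

lemma prod_Icc_sdiff_two_one_add_sq_div_pow_four {N : ℕ} (hN : 2 ≤ N) (r : ℝ) :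
    (1 + r ^ 2 / 16) * ∏ k ∈ Finset.Icc 1 N \ {2}, (1 + r ^ 2 / (k : ℝ) ^ 4)
      = ∏ k ∈ Finset.Icc 1 N, (1 + r ^ 2 / (k : ℝ) ^ 4) := by
  rw [Finset.sdiff_singleton_eq_erase, ← Finset.mul_prod_erase _ _
    (Finset.mem_Icc.mpr ⟨one_le_two, hN⟩)]
  norm_num

lemma norm_one_sub_I_mul_ofReal_sq (x : ℝ) : ‖1 - Complex.I * x‖ ^ 2 = 1 + x ^ 2 := by
  rw [Complex.sq_norm, Complex.normSq_apply]
  simp only [Complex.sub_re, Complex.sub_im, Complex.one_re, Complex.one_im, Complex.mul_re,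
    Complex.mul_im, Complex.I_re, Complex.I_im, Complex.ofReal_re, Complex.ofReal_im]
  ring

lemma norm_pairFactor_shiftM_ofReal_le {k : ℕ} (hk : 1 ≤ k) (x : ℝ) :
    ‖pairFactor k (shiftM k) x‖ ≤ exp (4 / (k : ℝ) ^ 2) * (1 + |x| ^ 2 / (k : ℝ) ^ 4) := by
  have hdiv : (x : ℂ) / (k : ℂ) ^ 2 = ((x / (k : ℝ) ^ 2 : ℝ) : ℂ) := by push_cast; rfl
  have hsq : |x| ^ 2 / (k : ℝ) ^ 4 = (x / (k : ℝ) ^ 2) ^ 2 := by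
    rw [sq_abs, div_pow, ← pow_mul]
  calc ‖pairFactor k (shiftM k) x‖
      ≤ 1 + (x / (k : ℝ) ^ 2) ^ 2 + ‖shiftP k - 1‖ * (x / (k : ℝ) ^ 2) ^ 2 := by
        rw [pairFactor_shiftM_eq_sub hk, mul_div_assoc, hdiv]
        refine (norm_sub_le _ _).trans_eq ?_
        rw [norm_pow, norm_one_sub_I_mul_ofReal_sq, norm_mul, norm_pow, Complex.norm_real,
          norm_eq_abs, sq_abs]
    _ ≤ (1 + 4 / (k : ℝ) ^ 2) * (1 + |x| ^ 2 / (k : ℝ) ^ 4) := by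
        rw [hsq]
        nlinarith [norm_shiftP_sub_one_le hk, sq_nonneg (x / (k : ℝ) ^ 2),
          show 0 ≤ 4 / (k : ℝ) ^ 2 by positivity]
    _ ≤ exp (4 / (k : ℝ) ^ 2) * (1 + |x| ^ 2 / (k : ℝ) ^ 4) := by
        gcongr
        linarith [add_one_le_exp (4 / (k : ℝ) ^ 2)]

lemma norm_pairProduct_shiftM_ofReal_le {x : ℝ} (hx : 1 ≤ |x|) :
    ‖pairProduct shiftM {2} x‖ ≤ 16 * exp 8 * (exp (√2 * π * √|x|) / |x| ^ 3) := by
  have hx0 : 0 < |x| := by linarith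
  refine norm_pairProduct_le (fun _ => one_le_norm_shiftM) ?_
  filter_upwards [eventually_ge_atTop 2] with N hN
  set Q := ∏ k ∈ Finset.Icc 1 N \ {2}, (1 + |x| ^ 2 / (k : ℝ) ^ 4) with hQ
  have hQ0 : 0 ≤ Q := Finset.prod_nonneg fun k _ => by positivity
  have hQle : Q ≤ 16 * (exp (√2 * π * √|x|) / |x| ^ 3) := by
    have hfull := (prod_Icc_sdiff_two_one_add_sq_div_pow_four hN |x|).trans_le
      (prod_one_add_sq_div_pow_four_le hx N)
    rw [le_div_iff₀ hx0, ← hQ] at hfull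
    rw [← mul_div_assoc, le_div_iff₀ (by positivity)]
    nlinarith [mul_nonneg hQ0 hx0.le]
  calc ∏ k ∈ Finset.Icc 1 N \ {2}, ‖pairFactor k (shiftM k) x‖
      ≤ exp (2 * 4) * Q :=
        prod_le_exp_mul_prod (by norm_num) _ (fun k _ => norm_nonneg _) fun k hk =>
          norm_pairFactor_shiftM_ofReal_le (Finset.mem_Icc.mp (Finset.mem_sdiff.mp hk).1).1 x
    _ ≤ exp (2 * 4) * (16 * (exp (√2 * π * √|x|) / |x| ^ 3)) := by gcongr
    _ = 16 * exp 8 * (exp (√2 * π * √|x|) / |x| ^ 3) := by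
        norm_num1
        ring

lemma norm_canonicalProduct_ofReal_le {x : ℝ} (hx : 1 ≤ |x|) :
    ‖canonicalProduct x‖ ≤ 16 * exp (24 + π) * (exp (√2 * π * √|x|) / |x| ^ 3) := by
  have him : |((x : ℂ) + Complex.I).im| = 1 := by simp
  have hnorm : |x| ≤ ‖(x : ℂ) + Complex.I‖ := by
    simpa using Complex.abs_re_le_norm ((x : ℂ) + Complex.I)
  have hP : |x| * ‖pairProduct shiftP ∅ x‖ ≤ exp (16 + π) := by
    have hle := norm_pairProduct_shiftP_le him.ge
    rw [him, mul_one, ← mul_div_assoc, ← exp_add, le_div_iff₀ (by linarith)] at hle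
    rw [mul_comm]
    exact (mul_le_mul_of_nonneg_left hnorm (norm_nonneg _)).trans hle
  calc ‖canonicalProduct x‖
      = |x| * ‖pairProduct shiftP ∅ x‖ * ‖pairProduct shiftM {2} x‖ := by
        rw [canonicalProduct, norm_mul, norm_mul, Complex.norm_real, norm_eq_abs]
    _ ≤ exp (16 + π) * (16 * exp 8 * (exp (√2 * π * √|x|) / |x| ^ 3)) :=
        mul_le_mul hP (norm_pairProduct_shiftM_ofReal_le hx) (norm_nonneg _) (exp_pos _).le
    _ = 16 * exp (24 + π) * (exp (√2 * π * √|x|) / |x| ^ 3) := by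
        rw [show (24 : ℝ) + π = 16 + π + 8 by ring, exp_add (16 + π)]
        ring

lemma exists_norm_canonicalProduct_ofReal_le :
    ∃ C > 0, ∀ x : ℝ, ‖canonicalProduct x‖ ≤ C * exp (√2 * π * √|x|) / (1 + |x|) ^ 3 := by
  obtain ⟨A, hA, hle⟩ := exists_norm_canonicalProduct_le_exp one_pos
  refine ⟨8 * (A * exp (π + 1) + 16 * exp (24 + π)), by positivity, fun x => ?_⟩
  rw [le_div_iff₀ (by positivity)]
  rcases le_total |x| 1 with hx | hx
  · have hP : ‖canonicalProduct x‖ ≤ A * exp (π + 1) := by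
      refine (hle x).trans ?_
      rw [Complex.norm_real, norm_eq_abs]
      gcongr
      exact mul_le_of_le_one_right (by positivity) hx
    have hpow : (1 + |x|) ^ 3 ≤ 8 := by
      calc (1 + |x|) ^ 3 ≤ (1 + 1) ^ 3 := by gcongr
        _ = 8 := by norm_num
    calc ‖canonicalProduct x‖ * (1 + |x|) ^ 3 ≤ A * exp (π + 1) * 8 := by gcongr
      _ ≤ 8 * (A * exp (π + 1) + 16 * exp (24 + π)) := by
          linarith [exp_pos (24 + π)]
      _ ≤ _ := le_mul_of_one_le_right (by positivity) (one_le_exp (by positivity))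
  · have hpow : (1 + |x|) ^ 3 ≤ 8 * |x| ^ 3 := by
      calc (1 + |x|) ^ 3 ≤ (|x| + |x|) ^ 3 := by gcongr
        _ = 8 * |x| ^ 3 := by ring
    have hx0 : 0 < |x| ^ 3 := pow_pos (by linarith) 3
    calc ‖canonicalProduct x‖ * (1 + |x|) ^ 3
        ≤ 16 * exp (24 + π) * (exp (√2 * π * √|x|) / |x| ^ 3) * (8 * |x| ^ 3) := by
          gcongr
          exact norm_canonicalProduct_ofReal_le hx
      _ = 8 * (16 * exp (24 + π)) * exp (√2 * π * √|x|) := by field_simp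
      _ ≤ 8 * (A * exp (π + 1) + 16 * exp (24 + π)) * exp (√2 * π * √|x|) := by
          gcongr
          exact le_add_of_nonneg_left (by positivity)

/-! ### The derivative at the hyperbolic zeros -/

lemma abs_sq_sub_re_sq_le_norm (k : ℕ) (u : ℂ) :
    |(k : ℝ) ^ 2 - u.re ^ 2| ≤ ‖(k : ℂ) ^ 2 - u ^ 2‖ := by
  rw [sq_sub_sq, sq_sub_sq, abs_mul, norm_mul]
  gcongr
  · simpa using Complex.abs_re_le_norm ((k : ℂ) + u)
  · simpa using Complex.abs_re_le_norm ((k : ℂ) - u)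

lemma im_sq_le_norm_sq_sub_sq (k : ℕ) (u : ℂ) : u.im ^ 2 ≤ ‖(k : ℂ) ^ 2 - u ^ 2‖ := by
  rw [← sq_abs, sq |u.im|, sq_sub_sq, norm_mul]
  gcongr
  · simpa using Complex.abs_im_le_norm ((k : ℂ) + u)
  · simpa using Complex.abs_im_le_norm ((k : ℂ) - u)

lemma abs_eq_natCast_of_sq_eq {n : ℕ} {κ : ℝ} (hκ : κ ^ 2 = (n : ℝ) ^ 2) : |κ| = n := by
  rw [(sq_eq_sq_iff_abs_eq_abs _ _).mp hκ, Nat.abs_cast]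

section HyperbolicZero

variable {n : ℕ} {κ α : ℝ} {w : ℂ}

lemma sq_sub_one_le_three_mul_norm_pairFactor_one (hn : 3 ≤ n) (hκ : κ ^ 2 = (n : ℝ) ^ 2)
    (hw : w = -κ - Complex.I * α) {c : ℂ} (hc : c ^ 2 = c - 1) :
    (n : ℝ) ^ 2 - 1 ≤ 3 * ‖pairFactor 1 c w‖ := by
  have hn' : (3 : ℝ) ≤ n := by exact_mod_cast hn
  have hnorm := norm_eq_one_of_sq_eq_sub_one hc
  have hc0 : c ≠ 0 := norm_pos_iff.mp (by rw [hnorm]; exact one_pos)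
  have heq := norm_sq_sub_sq_eq_mul_norm_pairFactor one_ne_zero hc0
    (by linear_combination hc) w
  have hre : (n : ℝ) - 1 ≤ |(w + Complex.I * c).re| := by
    have hure : (w + Complex.I * c).re = -(κ + c.im) := by
      simp only [hw, Complex.add_re, Complex.sub_re, Complex.neg_re, Complex.mul_re, Complex.I_re,
        Complex.I_im, Complex.ofReal_re, Complex.ofReal_im]
      ring
    have him := Complex.abs_im_le_norm c
    rw [hure, abs_neg, ← abs_eq_natCast_of_sq_eq hκ]
    have htri := abs_sub_abs_le_abs_sub κ (-c.im)
    rw [abs_neg, sub_neg_eq_add] at htri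
    linarith
  have hsq := pow_le_pow_left₀ (by linarith) hre 2
  have habs := (neg_le_abs _).trans (abs_sq_sub_re_sq_le_norm 1 (w + Complex.I * c))
  rw [heq, hnorm] at habs
  rw [sq_abs] at hsq
  simp only [Nat.cast_one, one_pow, one_mul] at habs
  nlinarith

lemma abs_sq_sub_sq_div_sq_le_norm_pairFactor_shiftP (hn : 3 ≤ n) (hκ : κ ^ 2 = (n : ℝ) ^ 2)
    (hw : w = -κ - Complex.I * α) {l : ℕ} (hl : 1 ≤ l) :
    |(l : ℝ) ^ 2 - (n : ℝ) ^ 2| / (l : ℝ) ^ 2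
      ≤ exp (4 / (l : ℝ) ^ 2) * ‖pairFactor l (shiftP l) w‖ := by
  rcases hl.eq_or_lt with rfl | hl2
  · have hle := sq_sub_one_le_three_mul_norm_pairFactor_one hn hκ hw shiftP_one_sq
    have hn' : (3 : ℝ) ≤ n := by exact_mod_cast hn
    have hexp := add_one_le_exp (4 : ℝ)
    rw [abs_sub_comm, Nat.cast_one, one_pow, div_one, div_one, abs_of_nonneg (by nlinarith)]
    nlinarith [norm_nonneg (pairFactor 1 (shiftP 1) w)]
  · obtain ⟨a, -, ha, -⟩ := exists_real_shifts hl2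
    have hP : ‖shiftP l‖ ≤ exp (4 / (l : ℝ) ^ 2) := by
      have htri := norm_add_le (shiftP l - 1) 1
      rw [sub_add_cancel, norm_one] at htri
      linarith [norm_shiftP_sub_one_le hl, add_one_le_exp (4 / (l : ℝ) ^ 2)]
    have hre : (w + Complex.I * shiftP l).re = -κ := by simp [hw, ha]
    have hle := abs_sq_sub_re_sq_le_norm l (w + Complex.I * shiftP l)
    rw [hre, neg_sq, hκ, norm_sq_sub_sq_eq_mul_norm_pairFactor (by omega) (shiftP_ne_zero hl)
      (sq_add_shiftP_sq l)] at hle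
    rw [div_le_iff₀ (by positivity)]
    calc |(l : ℝ) ^ 2 - (n : ℝ) ^ 2|
        ≤ (l : ℝ) ^ 2 * ‖shiftP l‖ * ‖pairFactor l (shiftP l) w‖ := hle
      _ ≤ (l : ℝ) ^ 2 * exp (4 / (l : ℝ) ^ 2) * ‖pairFactor l (shiftP l) w‖ := by gcongr
      _ = _ := by ring

lemma le_norm_pairProduct_shiftP_singleton (hn : 3 ≤ n) (hκ : κ ^ 2 = (n : ℝ) ^ 2)
    (hw : w = -κ - Complex.I * α) : 1 / (2 * exp 8) ≤ ‖pairProduct shiftP {n} w‖ := by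
  refine le_norm_pairProduct (fun _ => one_le_norm_shiftP) ?_
  filter_upwards [eventually_ge_atTop n] with N hN
  rw [div_le_iff₀' (by positivity), mul_assoc, ← div_le_iff₀' two_pos]
  calc 1 / 2 ≤ ∏ l ∈ Finset.Icc 1 N \ {n}, |(l : ℝ) ^ 2 - (n : ℝ) ^ 2| / (l : ℝ) ^ 2 :=
        one_half_le_prod_abs_sq_sub_sq_div_sq (by omega) hN
    _ ≤ exp (2 * 4) * ∏ l ∈ Finset.Icc 1 N \ {n}, ‖pairFactor l (shiftP l) w‖ :=
        prod_le_exp_mul_prod (by norm_num) _ (fun l _ => by positivity) fun l hl =>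
          abs_sq_sub_sq_div_sq_le_norm_pairFactor_shiftP hn hκ hw
            (Finset.mem_Icc.mp (Finset.mem_sdiff.mp hl).1).1
    _ = exp 8 * ∏ l ∈ Finset.Icc 1 N \ {n}, ‖pairFactor l (shiftP l) w‖ := by norm_num

lemma one_sub_mul_le_norm_pairFactor_shiftM (hκ : κ ^ 2 = (n : ℝ) ^ 2)
    (hw : w = -κ - Complex.I * α) (hα2 : α ≤ 2) {l : ℕ} (hl : 2 ≤ l) :
    (1 - 4 / (l : ℝ) ^ 2) * (1 + (n : ℝ) ^ 2 / (l : ℝ) ^ 4) ≤ ‖pairFactor l (shiftM l) w‖ := by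
  have hl2 : (0 : ℝ) < (l : ℝ) ^ 2 := by positivity
  set q := 1 / (l : ℝ) ^ 2 with hq
  have hq0 : 0 ≤ q := by positivity
  have hq4 : 4 * q ≤ 1 := by
    have : (2 : ℝ) ≤ l := by exact_mod_cast hl
    rw [hq, mul_one_div, div_le_one hl2]
    nlinarith
  have hleft : ‖1 - Complex.I * w / (l : ℂ) ^ 2‖ ^ 2 = (1 - α * q) ^ 2 + (n : ℝ) ^ 2 * q ^ 2 := by
    have heq : 1 - Complex.I * w / (l : ℂ) ^ 2
        = ((1 - α * q : ℝ) : ℂ) + ((κ * q : ℝ) : ℂ) * Complex.I := by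
      rw [hw, hq]
      push_cast
      linear_combination (α / (l : ℂ) ^ 2) * Complex.I_sq
    rw [heq, Complex.sq_norm, Complex.normSq_add_mul_I, mul_pow, hκ]
  have hright : ‖w / (l : ℂ) ^ 2‖ ^ 2 = ((n : ℝ) ^ 2 + α ^ 2) * q ^ 2 := by
    have heq : w = ((-κ : ℝ) : ℂ) + ((-α : ℝ) : ℂ) * Complex.I := by
      rw [hw]
      push_cast
      ring
    rw [norm_div, div_pow, heq, Complex.sq_norm, Complex.normSq_add_mul_I, neg_sq, hκ, neg_sq,
      norm_pow, Complex.norm_natCast, hq]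
    ring
  have hP : ‖shiftP l - 1‖ ≤ 4 * q := by
    simpa only [hq, mul_one_div] using norm_shiftP_sub_one_le (by omega : 1 ≤ l)
  calc (1 - 4 / (l : ℝ) ^ 2) * (1 + (n : ℝ) ^ 2 / (l : ℝ) ^ 4)
      = (1 - 4 * q) * (1 + (n : ℝ) ^ 2 * q ^ 2) := by
        rw [hq]
        ring
    _ ≤ (1 - α * q) ^ 2 + (n : ℝ) ^ 2 * q ^ 2 - 4 * q * (((n : ℝ) ^ 2 + α ^ 2) * q ^ 2) := by
        nlinarith [mul_nonneg (sub_nonneg.mpr hα2) hq0,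
          mul_nonneg (sub_nonneg.mpr hq4) (sq_nonneg (α * q))]
    _ ≤ ‖1 - Complex.I * w / (l : ℂ) ^ 2‖ ^ 2 - ‖shiftP l - 1‖ * ‖w / (l : ℂ) ^ 2‖ ^ 2 := by
        rw [hleft, hright]
        gcongr
    _ ≤ ‖pairFactor l (shiftM l) w‖ := by
        rw [pairFactor_shiftM_eq_sub (by omega), ← norm_pow, ← norm_pow, ← norm_mul]
        exact norm_sub_norm_le _ _

lemma one_add_sq_div_pow_four_le_norm_pairFactor_shiftM (hn : 3 ≤ n) (hκ : κ ^ 2 = (n : ℝ) ^ 2)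
    (hw : w = -κ - Complex.I * α) (hα2 : α ≤ 2) {l : ℕ} (hl : 1 ≤ l) (hl2 : l ≠ 2) :
    1 + (n : ℝ) ^ 2 / (l : ℝ) ^ 4
      ≤ exp (8 / (l : ℝ) ^ 2) * ‖pairFactor l (shiftM l) w‖ := by
  rcases hl.eq_or_lt with rfl | hl1
  · have hle := sq_sub_one_le_three_mul_norm_pairFactor_one hn hκ hw shiftM_one_sq
    have hn' : (3 : ℝ) ≤ n := by exact_mod_cast hn
    have hexp := add_one_le_exp (8 : ℝ)
    rw [Nat.cast_one, one_pow, one_pow, div_one, div_one]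
    nlinarith [norm_nonneg (pairFactor 1 (shiftM 1) w)]
  · have hl3 : (3 : ℝ) ≤ l := by exact_mod_cast (by omega : 3 ≤ l)
    have hx0 : 0 ≤ 8 / (l : ℝ) ^ 2 := by positivity
    have hx1 : 8 / (l : ℝ) ^ 2 ≤ 1 := by
      rw [div_le_one (by positivity)]
      nlinarith
    have hone : 1 ≤ exp (8 / (l : ℝ) ^ 2) * (1 - 4 / (l : ℝ) ^ 2) := by
      rw [show 4 / (l : ℝ) ^ 2 = 8 / (l : ℝ) ^ 2 / 2 by ring]
      nlinarith [add_one_le_exp (8 / (l : ℝ) ^ 2)]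
    calc 1 + (n : ℝ) ^ 2 / (l : ℝ) ^ 4
        ≤ exp (8 / (l : ℝ) ^ 2) * (1 - 4 / (l : ℝ) ^ 2) * (1 + (n : ℝ) ^ 2 / (l : ℝ) ^ 4) :=
          le_mul_of_one_le_left (by positivity) hone
      _ ≤ exp (8 / (l : ℝ) ^ 2) * ‖pairFactor l (shiftM l) w‖ := by
          rw [mul_assoc]
          gcongr
          exact one_sub_mul_le_norm_pairFactor_shiftM hκ hw hα2 hl1

lemma le_norm_pairProduct_shiftM_singleton_two (hn : 3 ≤ n) (hκ : κ ^ 2 = (n : ℝ) ^ 2)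
    (hw : w = -κ - Complex.I * α) (hα2 : α ≤ 2) :
    exp (√2 * π * √n) / (256 * exp 16 * (n : ℝ) ^ 3) ≤ ‖pairProduct shiftM {2} w‖ := by
  have hn' : (3 : ℝ) ≤ n := by exact_mod_cast hn
  refine le_norm_pairProduct (fun _ => one_le_norm_shiftM) ?_
  filter_upwards [eventually_le_prod_one_add_sq_div_pow_four (r := n) (by linarith),
    eventually_ge_atTop 2] with N hN hN2
  rw [← prod_Icc_sdiff_two_one_add_sq_div_pow_four hN2, div_le_iff₀ (by positivity)] at hN
  rw [div_le_iff₀ (by positivity)]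
  set Q := ∏ l ∈ Finset.Icc 1 N \ {2}, (1 + (n : ℝ) ^ 2 / (l : ℝ) ^ 4)
  have hQ0 : 0 ≤ Q := Finset.prod_nonneg fun l _ => by positivity
  have hQ : Q ≤ exp (2 * 8) * ∏ l ∈ Finset.Icc 1 N \ {2}, ‖pairFactor l (shiftM l) w‖ := by
    refine prod_le_exp_mul_prod (by norm_num) _ (fun l _ => by positivity) fun l hl => ?_
    obtain ⟨hl1, hl2⟩ := Finset.mem_sdiff.mp hl
    exact one_add_sq_div_pow_four_le_norm_pairFactor_shiftM hn hκ hw hα2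
      (Finset.mem_Icc.mp hl1).1 (Finset.notMem_singleton.mp hl2)
  calc exp (√2 * π * √n) ≤ (1 + (n : ℝ) ^ 2 / 16) * Q * (256 * n) := hN
    _ ≤ (n : ℝ) ^ 2 * Q * (256 * n) := by
        gcongr
        nlinarith
    _ ≤ (n : ℝ) ^ 2 * (exp (2 * 8) * ∏ l ∈ Finset.Icc 1 N \ {2}, ‖pairFactor l (shiftM l) w‖)
          * (256 * n) := by gcongr
    _ = _ := by
        norm_num1
        ring

end HyperbolicZero

lemma le_norm_deriv_canonicalProduct_shiftP {n : ℕ} (hn : 3 ≤ n) {κ : ℝ}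
    (hκ : κ ^ 2 = (n : ℝ) ^ 2) :
    exp (√2 * π * √n) / (512 * exp 24 * (n : ℝ) ^ 3)
      ≤ ‖deriv canonicalProduct (-κ - Complex.I * shiftP n)‖ := by
  obtain ⟨α, -, hα, -, -, hα2, -⟩ := exists_real_shifts (by omega : 2 ≤ n)
  have hn0 : (0 : ℝ) < n := by exact_mod_cast (by omega : 0 < n)
  obtain ⟨w, hw⟩ : ∃ w : ℂ, w = -κ - Complex.I * α := ⟨_, rfl⟩
  have hprefactor : 1 ≤ 2 / (n * ‖shiftP n‖) * ‖w‖ := by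
    have hre := Complex.abs_re_le_norm w
    have hwre : w.re = -κ := by simp [hw]
    have hnw : (n : ℝ) ≤ ‖w‖ := by
      rwa [hwre, abs_neg, abs_eq_natCast_of_sq_eq hκ] at hre
    rw [div_mul_eq_mul_div, one_le_div (mul_pos hn0 (norm_pos_iff.mpr (shiftP_ne_zero (by omega))))]
    nlinarith [norm_shiftP_le_two (by omega : 1 ≤ n), norm_nonneg (shiftP n)]
  rw [norm_deriv_canonicalProduct_shiftP (by omega) (by exact_mod_cast hκ) rfl, hα, ← hw, ← hα]
  calc exp (√2 * π * √n) / (512 * exp 24 * (n : ℝ) ^ 3)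
      = 1 * (1 / (2 * exp 8)) * (exp (√2 * π * √n) / (256 * exp 16 * (n : ℝ) ^ 3)) := by
        rw [show (24 : ℝ) = 8 + 16 by norm_num, exp_add]
        field_simp
        norm_num
    _ ≤ _ := by
        gcongr
        · exact le_norm_pairProduct_shiftP_singleton hn hκ hw
        · exact le_norm_pairProduct_shiftM_singleton_two hn hκ hw hα2

/-! ### The derivative at the parabolic zeros -/

section ParabolicZero

variable {n : ℕ} {κ β : ℝ} {w : ℂ}

lemma norm_one_sub_sq_div_sq_le_norm_pairFactor_shiftP (hw : w = -κ - Complex.I * β) (hβ : 3 ≤ β)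
    {l : ℕ} (hl : 1 ≤ l) :
    ‖1 - (w + Complex.I) ^ 2 / (l : ℂ) ^ 2‖
      ≤ exp (12 / (l : ℝ) ^ 2) * ‖pairFactor l (shiftP l) w‖ := by
  have hl2 : (0 : ℝ) < (l : ℝ) ^ 2 := by positivity
  have him : 1 ≤ |(w + Complex.I * shiftP l).im| := by
    have heq : (w + Complex.I * shiftP l).im = -(β - (shiftP l).re) := by
      simp only [hw, Complex.add_im, Complex.sub_im, Complex.neg_im, Complex.mul_im, Complex.I_re,
        Complex.I_im, Complex.ofReal_re, Complex.ofReal_im]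
      ring
    have hre := (Complex.re_le_norm (shiftP l)).trans (norm_shiftP_le_two hl)
    rw [heq, abs_neg]
    exact le_trans (by linarith) (le_abs_self _)
  have hdist : ‖w + Complex.I - (w + Complex.I * shiftP l)‖ ≤ 4 / (l : ℝ) ^ 2 := by
    rw [add_sub_add_left_eq_sub, ← mul_one_sub, norm_mul, Complex.norm_I, one_mul, norm_sub_rev]
    exact norm_shiftP_sub_one_le hl
  have hP : ‖shiftP l‖ ≤ 1 + 4 / (l : ℝ) ^ 2 := by
    have htri := norm_add_le (shiftP l - 1) 1
    rw [sub_add_cancel, norm_one] at htri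
    linarith [norm_shiftP_sub_one_le hl]
  have hle := norm_sq_sub_sq_le_of_norm_sub_le him hdist l
  rw [norm_natCast_sq_sub_sq (by omega), norm_sq_sub_sq_eq_mul_norm_pairFactor (by omega)
    (shiftP_ne_zero hl) (sq_add_shiftP_sq l)] at hle
  refine le_of_mul_le_mul_left ?_ hl2
  calc (l : ℝ) ^ 2 * ‖1 - (w + Complex.I) ^ 2 / (l : ℂ) ^ 2‖
      ≤ (1 + 4 / (l : ℝ) ^ 2) ^ 2 * ((l : ℝ) ^ 2 * ‖shiftP l‖ * ‖pairFactor l (shiftP l) w‖) :=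
        hle
    _ ≤ (1 + 4 / (l : ℝ) ^ 2) ^ 2
          * ((l : ℝ) ^ 2 * (1 + 4 / (l : ℝ) ^ 2) * ‖pairFactor l (shiftP l) w‖) := by gcongr
    _ = (l : ℝ) ^ 2 * ((1 + 4 / (l : ℝ) ^ 2) ^ 3 * ‖pairFactor l (shiftP l) w‖) := by ring
    _ ≤ (l : ℝ) ^ 2 * (exp ((3 : ℕ) * 4 / (l : ℝ) ^ 2) * ‖pairFactor l (shiftP l) w‖) := by
        gcongr
        exact one_add_div_sq_pow_le_exp (by norm_num) 3 l
    _ = _ := by norm_num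

lemma le_norm_pairProduct_shiftP_empty (hw : w = -κ - Complex.I * β) (hβ : 3 ≤ β) :
    exp (π * (β - 1)) / (16 * exp 24 * ‖w + Complex.I‖) ≤ ‖pairProduct shiftP ∅ w‖ := by
  have him : |(w + Complex.I).im| = β - 1 := by
    have heq : (w + Complex.I).im = -(β - 1) := by
      simp only [hw, Complex.add_im, Complex.sub_im, Complex.neg_im, Complex.mul_im, Complex.I_re,
        Complex.I_im, Complex.ofReal_re, Complex.ofReal_im]
      ring
    rw [heq, abs_neg]
    exact abs_of_nonneg (by linarith)
  have hpos : 0 < ‖w + Complex.I‖ :=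
    lt_of_lt_of_le (by rw [him]; linarith) (Complex.abs_im_le_norm _)
  refine le_norm_pairProduct (fun _ => one_le_norm_shiftP) ?_
  have hlow := eventually_le_prod_norm_one_sub_sq_div_sq (v := w + Complex.I) (by
    rw [him]
    linarith)
  filter_upwards [hlow] with N hN
  have hprod := prod_le_exp_mul_prod (by norm_num) (Finset.Icc 1 N) (fun l _ => norm_nonneg _)
    fun l hl => norm_one_sub_sq_div_sq_le_norm_pairFactor_shiftP hw hβ (Finset.mem_Icc.mp hl).1
  rw [him, div_le_iff₀ (by positivity)] at hN
  rw [Finset.sdiff_empty, div_le_iff₀ (by positivity)]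
  calc exp (π * (β - 1))
      ≤ (∏ l ∈ Finset.Icc 1 N, ‖1 - (w + Complex.I) ^ 2 / (l : ℂ) ^ 2‖)
          * (16 * ‖w + Complex.I‖) := hN
    _ ≤ exp (2 * 12) * (∏ l ∈ Finset.Icc 1 N, ‖pairFactor l (shiftP l) w‖)
          * (16 * ‖w + Complex.I‖) := by gcongr
    _ = _ := by
        norm_num1
        ring

lemma le_norm_pairProduct_shiftP_empty_of_sq_le (hw : w = -κ - Complex.I * β) (hn : 3 ≤ n)
    (hκ : κ ^ 2 = (n : ℝ) ^ 2) (hβn : (n : ℝ) ^ 2 - 2 ≤ β) (hβn' : β ≤ (n : ℝ) ^ 2) :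
    exp (π * ((n : ℝ) ^ 2 - 3)) / (32 * exp 24 * (n : ℝ) ^ 2) ≤ ‖pairProduct shiftP ∅ w‖ := by
  have hn' : (3 : ℝ) ≤ n := by exact_mod_cast hn
  have hβ3 : 3 ≤ β := by nlinarith
  have hre : (w + Complex.I).re = -κ := by simp [hw]
  have him : (w + Complex.I).im = -(β - 1) := by
    simp only [hw, Complex.add_im, Complex.sub_im, Complex.neg_im, Complex.mul_im, Complex.I_re,
      Complex.I_im, Complex.ofReal_re, Complex.ofReal_im]
    ring
  have hle : ‖w + Complex.I‖ ≤ 2 * (n : ℝ) ^ 2 := by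
    have hsum := Complex.norm_le_abs_re_add_abs_im (w + Complex.I)
    rw [hre, him, abs_neg, abs_neg, abs_eq_natCast_of_sq_eq hκ,
      abs_of_nonneg (by linarith)] at hsum
    nlinarith
  have hpos : 0 < ‖w + Complex.I‖ := by
    refine norm_pos_iff.mpr fun h => ?_
    rw [h, Complex.zero_im] at him
    linarith
  calc exp (π * ((n : ℝ) ^ 2 - 3)) / (32 * exp 24 * (n : ℝ) ^ 2)
      = exp (π * ((n : ℝ) ^ 2 - 3)) / (16 * exp 24 * (2 * (n : ℝ) ^ 2)) := by ring
    _ ≤ exp (π * (β - 1)) / (16 * exp 24 * ‖w + Complex.I‖) := by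
        gcongr exp (π * ?_) / (16 * exp 24 * ?_)
        linarith
    _ ≤ ‖pairProduct shiftP ∅ w‖ := le_norm_pairProduct_shiftP_empty hw hβ3

lemma abs_sq_sub_sq_le_norm_shiftM_sub {l n : ℕ} (hl : 2 ≤ l) (hn : 2 ≤ n) :
    |(l : ℝ) ^ 2 - (n : ℝ) ^ 2| ≤ ‖shiftM l - shiftM n‖ := by
  obtain ⟨a, b, -, hb, ha1, ha2, hadd, hmul⟩ := exists_real_shifts hl
  obtain ⟨a', b', -, hb', ha1', ha2', hadd', hmul'⟩ := exists_real_shifts hn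
  have hfac : (l : ℝ) ^ 2 - (n : ℝ) ^ 2 = (b - b') * (1 - (a - 1) * (a' - 1)) := by
    -- `(a - 1) (b - 1) = 1`, so `a - a' = -(b - b') (a - 1) (a' - 1)`
    linear_combination (a' - 1) * (hmul - hadd) - (a - 1) * (hmul' - hadd') - hadd + hadd'
  have hle : |1 - (a - 1) * (a' - 1)| ≤ 1 := by
    rw [abs_le]
    constructor <;> nlinarith
  rw [hb, hb', ← Complex.ofReal_sub, Complex.norm_real, norm_eq_abs, hfac, abs_mul]
  exact mul_le_of_le_one_right (abs_nonneg _) hle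

lemma sq_abs_sq_sub_sq_div_sq_le_norm_pairFactor_shiftM (hn : 3 ≤ n) (hβ : shiftM n = β)
    (hw : w = -κ - Complex.I * β) {l : ℕ} (hl : 1 ≤ l) (hl2 : l ≠ 2) :
    (|(l : ℝ) ^ 2 - (n : ℝ) ^ 2| / (l : ℝ) ^ 2) ^ 2
      ≤ exp (4 / (l : ℝ) ^ 2) * ‖pairFactor l (shiftM l) w‖ := by
  have him : (w + Complex.I * shiftM l).im = (shiftM l).re - β := by
    simp only [hw, Complex.add_im, Complex.sub_im, Complex.neg_im, Complex.mul_im, Complex.I_re,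
      Complex.I_im, Complex.ofReal_re, Complex.ofReal_im]
    ring
  have hle := im_sq_le_norm_sq_sub_sq l (w + Complex.I * shiftM l)
  rw [him, norm_sq_sub_sq_eq_mul_norm_pairFactor (by omega) (shiftM_ne_zero hl)
    (sq_add_shiftM_sq l)] at hle
  rcases hl.eq_or_lt with rfl | hl1
  · obtain ⟨α, β', -, hβ', -, hα2, hadd, -⟩ := exists_real_shifts (by omega : 2 ≤ n)
    obtain rfl : β' = β := by exact_mod_cast hβ'.symm.trans hβ
    have hn' : (3 : ℝ) ≤ n := by exact_mod_cast hn
    rw [re_eq_half_of_sq_eq_sub_one shiftM_one_sq,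
      norm_eq_one_of_sq_eq_sub_one shiftM_one_sq] at hle
    simp only [Nat.cast_one, one_pow, one_mul, div_one, sq_abs] at hle ⊢
    have hexp := add_one_le_exp (4 : ℝ)
    have hle1 : (n : ℝ) ^ 2 - 1 ≤ 2 * β' - 1 := by nlinarith
    have hsq := pow_le_pow_left₀ (by nlinarith) hle1 2
    nlinarith [norm_nonneg (pairFactor 1 (shiftM 1) w)]
  · obtain ⟨_, b, -, hb, -⟩ := exists_real_shifts hl1
    have hdiff := abs_sq_sub_sq_le_norm_shiftM_sub hl1 (by omega : 2 ≤ n)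
    rw [hβ, hb, ← Complex.ofReal_sub, Complex.norm_real, norm_eq_abs] at hdiff
    have hM := norm_shiftM_le hl
    rw [div_pow, div_le_iff₀ (by positivity)]
    calc |(l : ℝ) ^ 2 - (n : ℝ) ^ 2| ^ 2 ≤ |b - β| ^ 2 := by gcongr
      _ ≤ (l : ℝ) ^ 2 * ‖shiftM l‖ * ‖pairFactor l (shiftM l) w‖ := by
          rwa [hb, Complex.ofReal_re, ← hb, ← sq_abs] at hle
      _ ≤ (l : ℝ) ^ 2 * (l : ℝ) ^ 2 * ‖pairFactor l (shiftM l) w‖ := by gcongr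
      _ ≤ (l : ℝ) ^ 2 * (l : ℝ) ^ 2 * (exp (4 / (l : ℝ) ^ 2) * ‖pairFactor l (shiftM l) w‖) := by
          gcongr
          exact le_mul_of_one_le_left (norm_nonneg _) (one_le_exp (by positivity))
      _ = _ := by ring

lemma le_prod_sq_abs_sq_sub_sq_div_sq {n N : ℕ} (hn : 3 ≤ n) (h : n ≤ N) :
    1 / (4 * (n : ℝ) ^ 4)
      ≤ ∏ l ∈ Finset.Icc 1 N \ {n, 2}, (|(l : ℝ) ^ 2 - (n : ℝ) ^ 2| / (l : ℝ) ^ 2) ^ 2 := by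
  have hn' : (3 : ℝ) ≤ n := by exact_mod_cast hn
  have hhalf := one_half_le_prod_abs_sq_sub_sq_div_sq (by omega : 1 ≤ n) h
  have htwo : |((2 : ℕ) : ℝ) ^ 2 - (n : ℝ) ^ 2| / ((2 : ℕ) : ℝ) ^ 2 ≤ (n : ℝ) ^ 2 := by
    push_cast
    rw [div_le_iff₀ (by norm_num), abs_sub_comm, abs_of_nonneg (by nlinarith)]
    nlinarith
  have hmem : 2 ∈ Finset.Icc 1 N \ {n} := by
    simp only [Finset.mem_sdiff, Finset.mem_Icc, Finset.mem_singleton]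
    omega
  rw [← Finset.mul_prod_erase _ _ hmem, ← Finset.sdiff_insert, Finset.pair_comm] at hhalf
  rw [Finset.prod_pow]
  set Q := ∏ l ∈ Finset.Icc 1 N \ {n, 2}, |(l : ℝ) ^ 2 - (n : ℝ) ^ 2| / (l : ℝ) ^ 2
  have hQ0 : 0 ≤ Q := Finset.prod_nonneg fun l _ => by positivity
  have hQ : 1 / (2 * (n : ℝ) ^ 2) ≤ Q := by
    rw [div_le_iff₀ (by positivity)]
    linarith [hhalf.trans (mul_le_mul_of_nonneg_right htwo hQ0)]
  calc 1 / (4 * (n : ℝ) ^ 4) = (1 / (2 * (n : ℝ) ^ 2)) ^ 2 := by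
        field_simp
        norm_num
    _ ≤ Q ^ 2 := by gcongr

lemma le_norm_pairProduct_shiftM_pair (hn : 3 ≤ n) (hβ : shiftM n = β)
    (hw : w = -κ - Complex.I * β) :
    1 / (4 * exp 8 * (n : ℝ) ^ 4) ≤ ‖pairProduct shiftM {n, 2} w‖ := by
  refine le_norm_pairProduct (fun _ => one_le_norm_shiftM) ?_
  filter_upwards [eventually_ge_atTop n] with N hN
  have hprod := prod_le_exp_mul_prod (C := 4) (by norm_num) (Finset.Icc 1 N \ {n, 2})
    (fun l _ => sq_nonneg (|(l : ℝ) ^ 2 - (n : ℝ) ^ 2| / (l : ℝ) ^ 2)) fun l hl => by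
      simp only [Finset.mem_sdiff, Finset.mem_Icc, Finset.mem_insert, Finset.mem_singleton,
        not_or] at hl
      exact sq_abs_sq_sub_sq_div_sq_le_norm_pairFactor_shiftM hn hβ hw hl.1.1 hl.2.2
  have hle := (le_prod_sq_abs_sq_sub_sq_div_sq hn hN).trans hprod
  have hn0 : (0 : ℝ) < n := by exact_mod_cast (by omega : 0 < n)
  norm_num1 at hle
  rw [div_le_iff₀ (by positivity)] at hle ⊢
  linarith

end ParabolicZero

lemma le_norm_deriv_canonicalProduct_shiftM {n : ℕ} (hn : 3 ≤ n) {κ : ℝ}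
    (hκ : κ ^ 2 = (n : ℝ) ^ 2) :
    exp (π * (n : ℝ) ^ 2) / (64 * exp (32 + 3 * π) * (n : ℝ) ^ 7)
      ≤ ‖deriv canonicalProduct (-κ - Complex.I * shiftM n)‖ := by
  obtain ⟨α, β, -, hβ, hα1, hα2, hadd, -⟩ := exists_real_shifts (by omega : 2 ≤ n)
  have hn' : (3 : ℝ) ≤ n := by exact_mod_cast hn
  have hβ7 : 7 ≤ β := by nlinarith
  obtain ⟨w, hw⟩ : ∃ w : ℂ, w = -κ - Complex.I * β := ⟨_, rfl⟩
  have hprefactor : 2 / n ≤ 2 / (n * ‖shiftM n‖) * ‖w‖ := by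
    have hwβ : β ≤ ‖w‖ := by
      have him := Complex.abs_im_le_norm w
      rw [show w.im = -β by simp [hw], abs_neg] at him
      exact (le_abs_self β).trans him
    rw [hβ, Complex.norm_real, norm_of_nonneg (by linarith), div_mul_eq_mul_div,
      div_le_div_iff₀ (by linarith) (by positivity)]
    nlinarith
  rw [norm_deriv_canonicalProduct_shiftM (by omega) (by omega) (by exact_mod_cast hκ) rfl, hβ,
    ← hw, ← hβ]
  calc exp (π * (n : ℝ) ^ 2) / (64 * exp (32 + 3 * π) * (n : ℝ) ^ 7)
      = 2 / n * (exp (π * ((n : ℝ) ^ 2 - 3)) / (32 * exp 24 * (n : ℝ) ^ 2))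
          * (1 / (4 * exp 8 * (n : ℝ) ^ 4)) := by
        rw [show π * ((n : ℝ) ^ 2 - 3) = π * (n : ℝ) ^ 2 - 3 * π by ring, exp_sub,
          show (32 : ℝ) = 24 + 8 by norm_num, exp_add, exp_add]
        field_simp
        norm_num
    _ ≤ _ := by
        gcongr
        · exact le_norm_pairProduct_shiftP_empty_of_sq_le hw hn hκ (by linarith) (by linarith)
        · exact le_norm_pairProduct_shiftM_pair hn hβ hw

/-! ### The first pair of zeros -/

section FirstPair

lemma pairFactor_ne_zero_of_im_ne_zero {k : ℕ} {c z : ℂ} (hk : k ≠ 0) (hc : c ≠ 0)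
    (hkc : (k : ℂ) ^ 2 + c ^ 2 = (k : ℂ) ^ 2 * c) (hz : (z + Complex.I * c).im ≠ 0) :
    pairFactor k c z ≠ 0 := by
  intro hzero
  have hle := im_sq_le_norm_sq_sub_sq k (z + Complex.I * c)
  rw [norm_sq_sub_sq_eq_mul_norm_pairFactor hk hc hkc, hzero, norm_zero, mul_zero] at hle
  exact hle.not_gt (by positivity)

lemma pairFactor_shiftP_ne_zero_of_im_eq {k : ℕ} (hk : 2 ≤ k) {w : ℂ} (hw : w.im = -(1 / 2)) :
    pairFactor k (shiftP k) w ≠ 0 := by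
  obtain ⟨α, -, hα, -, hα1, -⟩ := exists_real_shifts hk
  refine pairFactor_ne_zero_of_im_ne_zero (by omega) (shiftP_ne_zero (by omega))
    (sq_add_shiftP_sq k) (ne_of_gt ?_)
  rw [Complex.add_im, hw, hα, Complex.I_mul_im, Complex.ofReal_re]
  linarith

lemma pairFactor_shiftM_ne_zero_of_im_eq {k : ℕ} (hk : 2 ≤ k) {w : ℂ} (hw : w.im = -(1 / 2)) :
    pairFactor k (shiftM k) w ≠ 0 := by
  obtain ⟨α, β, -, hβ, -, hα2, hadd, -⟩ := exists_real_shifts hk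
  have hk2 : (4 : ℝ) ≤ (k : ℝ) ^ 2 := by exact_mod_cast Nat.pow_le_pow_left hk 2
  refine pairFactor_ne_zero_of_im_ne_zero (by omega) (shiftM_ne_zero (by omega))
    (sq_add_shiftM_sq k) (ne_of_gt ?_)
  rw [Complex.add_im, hw, hβ, Complex.I_mul_im, Complex.ofReal_re]
  linarith

lemma pairFactor_one_ne_zero {κ c c' : ℂ} (hκ : κ ^ 2 = 1) (hadd : c + c' = 1)
    (hmul : c * c' = 1) : pairFactor 1 c' (-κ - Complex.I * c) ≠ 0 := by
  intro hzero
  have hc' : c' ≠ 0 := right_ne_zero_of_mul_eq_one hmul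
  have hsq : c' ^ 2 = c' - 1 := by linear_combination c' * hadd - hmul
  have hnorm := norm_sq_sub_sq_eq_mul_norm_pairFactor one_ne_zero hc'
    (by push_cast; linear_combination hsq) (-κ - Complex.I * c)
  rw [hzero, norm_zero, mul_zero, norm_eq_zero, Nat.cast_one] at hnorm
  -- With `d = c' - c` one has `d² = -3`, while `(-κ + i d)² = 1 = κ²` would force `d² = -4`.
  have hd : (c' - c) ^ 2 = -3 := by linear_combination (c + c' + 1) * hadd - 4 * hmul
  have hlin : 2 * κ * Complex.I * (c' - c) = 3 := by
    linear_combination hnorm + hκ + (c' - c) ^ 2 * Complex.I_sq - hd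
  have hcontra : (12 : ℂ) = 9 := by
    linear_combination (2 * κ * Complex.I * (c' - c) + 3) * hlin
      - 4 * κ ^ 2 * (c' - c) ^ 2 * Complex.I_sq + 4 * κ ^ 2 * hd - 12 * hκ
  norm_num at hcontra

variable {κ : ℝ} {c : ℂ}

lemma im_neg_ofReal_sub_I_mul (hc : c ^ 2 = c - 1) : (-(κ : ℂ) - Complex.I * c).im = -(1 / 2) := by
  simp [re_eq_half_of_sq_eq_sub_one hc]

lemma deriv_canonicalProduct_shiftP_one_ne_zero (hκ : κ ^ 2 = 1) :
    deriv canonicalProduct (-κ - Complex.I * shiftP 1) ≠ 0 := by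
  have hκ' : (κ : ℂ) ^ 2 = 1 := by exact_mod_cast hκ
  have him : (-(κ : ℂ) - Complex.I * shiftP 1).im = -(1 / 2) :=
    im_neg_ofReal_sub_I_mul shiftP_one_sq
  have hadd : shiftP 1 + shiftM 1 = 1 := by simpa using shiftP_add_shiftM 1
  have hmul : shiftP 1 * shiftM 1 = 1 := by simpa using shiftP_mul_shiftM 1
  have hw0 : -(κ : ℂ) - Complex.I * shiftP 1 ≠ 0 := fun h => by norm_num [h] at him
  have hP : pairProduct shiftP {1} (-κ - Complex.I * shiftP 1) ≠ 0 :=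
    pairProduct_ne_zero (fun _ => one_le_norm_shiftP) fun k hk hk1 =>
      pairFactor_shiftP_ne_zero_of_im_eq (by grind) him
  have hM : pairProduct shiftM {2} (-κ - Complex.I * shiftP 1) ≠ 0 :=
    pairProduct_ne_zero (fun _ => one_le_norm_shiftM) fun k hk _ => by
      rcases hk.eq_or_lt with rfl | hk
      · exact pairFactor_one_ne_zero hκ' hadd hmul
      · exact pairFactor_shiftM_ne_zero_of_im_eq hk him
  rw [← norm_pos_iff, norm_deriv_canonicalProduct_shiftP le_rfl (by simpa using hκ') rfl]
  have hshift : 0 < ‖shiftP 1‖ := norm_pos_iff.mpr (shiftP_ne_zero le_rfl)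
  positivity

lemma deriv_canonicalProduct_shiftM_one_ne_zero (hκ : κ ^ 2 = 1) :
    deriv canonicalProduct (-κ - Complex.I * shiftM 1) ≠ 0 := by
  have hκ' : (κ : ℂ) ^ 2 = 1 := by exact_mod_cast hκ
  have him : (-(κ : ℂ) - Complex.I * shiftM 1).im = -(1 / 2) :=
    im_neg_ofReal_sub_I_mul shiftM_one_sq
  have hadd : shiftM 1 + shiftP 1 = 1 := by simpa [add_comm] using shiftP_add_shiftM 1
  have hmul : shiftM 1 * shiftP 1 = 1 := by simpa [mul_comm] using shiftP_mul_shiftM 1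
  have hw0 : -(κ : ℂ) - Complex.I * shiftM 1 ≠ 0 := fun h => by norm_num [h] at him
  have hP : pairProduct shiftP ∅ (-κ - Complex.I * shiftM 1) ≠ 0 :=
    pairProduct_ne_zero (fun _ => one_le_norm_shiftP) fun k hk _ => by
      rcases hk.eq_or_lt with rfl | hk
      · exact pairFactor_one_ne_zero hκ' hadd hmul
      · exact pairFactor_shiftP_ne_zero_of_im_eq hk him
  have hM : pairProduct shiftM {1, 2} (-κ - Complex.I * shiftM 1) ≠ 0 :=
    pairProduct_ne_zero (fun _ => one_le_norm_shiftM) fun k hk hk1 =>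
      pairFactor_shiftM_ne_zero_of_im_eq (by grind) him
  rw [← norm_pos_iff, norm_deriv_canonicalProduct_shiftM le_rfl (by norm_num)
    (by simpa using hκ') rfl]
  have hshift : 0 < ‖shiftM 1‖ := norm_pos_iff.mpr (shiftM_ne_zero le_rfl)
  positivity

end FirstPair

lemma eventually_forall_div_mul_le {ι : Type*} {p : ι → Prop} {f g h : ι → ℝ} {C₀ : ℝ}
    (s : Finset ι) (hC₀ : 0 < C₀) (hf : ∀ i, 0 ≤ f i) (hg : ∀ i, 0 ≤ g i)
    (hs : ∀ i ∈ s, 0 < h i) (hle : ∀ i ∉ s, p i → f i / (C₀ * g i) ≤ h i) :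
    ∀ᶠ C in atTop, ∀ i, p i → f i / (C * g i) ≤ h i := by
  simp only [mul_comm _ (g _), ← div_div] at hle ⊢
  have hfin : ∀ᶠ C in atTop, ∀ i ∈ s, f i / g i / C ≤ h i :=
    (Finset.eventually_all s).mpr fun i hi =>
      (tendsto_const_nhds.div_atTop tendsto_id).eventually_le_const (hs i hi)
  filter_upwards [hfin, eventually_ge_atTop C₀] with C hC hC₀C i hi
  by_cases his : i ∈ s
  · exact hC i his
  · refine le_trans ?_ (hle i his hi)
    have := div_nonneg (hf i) (hg i)
    gcongr

lemma eventually_le_norm_deriv_lamP : ∀ᶠ C : ℝ in atTop, ∀ k : ℤ, k ≠ 0 ∧ k ≠ 2 ∧ k ≠ -2 →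
    exp (√2 * π * √|(k : ℝ)|) / (C * |(k : ℝ)| ^ 3)
      ≤ ‖deriv canonicalProduct (Complex.I * lamP k)‖ := by
  refine eventually_forall_div_mul_le (C₀ := 512 * exp 24) {1, -1} (by positivity)
    (fun k => by positivity) (fun k => by positivity) (fun k hk => ?_) fun k hk hk' => ?_
  · obtain rfl | rfl : k = 1 ∨ k = -1 := by simpa using hk
    all_goals
      rw [I_mul_lamP, ← Complex.ofReal_intCast, norm_pos_iff]
      exact deriv_canonicalProduct_shiftP_one_ne_zero (by norm_num)
  · have habs : |(k : ℝ)| = k.natAbs := by rw [Nat.cast_natAbs, Int.cast_abs]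
    rw [I_mul_lamP, habs, ← Complex.ofReal_intCast]
    simp only [Finset.mem_insert, Finset.mem_singleton] at hk
    exact le_norm_deriv_canonicalProduct_shiftP (by omega) (by rw [← habs, sq_abs])

lemma eventually_le_norm_deriv_lamM : ∀ᶠ C : ℝ in atTop, ∀ k : ℤ, k ≠ 0 ∧ k ≠ 2 ∧ k ≠ -2 →
    exp (π * (k : ℝ) ^ 2) / (C * |(k : ℝ)| ^ 7)
      ≤ ‖deriv canonicalProduct (Complex.I * lamM k)‖ := by
  refine eventually_forall_div_mul_le (C₀ := 64 * exp (32 + 3 * π)) {1, -1} (by positivity)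
    (fun k => by positivity) (fun k => by positivity) (fun k hk => ?_) fun k hk hk' => ?_
  · obtain rfl | rfl : k = 1 ∨ k = -1 := by simpa using hk
    all_goals
      rw [I_mul_lamM, ← Complex.ofReal_intCast, norm_pos_iff]
      exact deriv_canonicalProduct_shiftM_one_ne_zero (by norm_num)
  · have habs : |(k : ℝ)| = k.natAbs := by rw [Nat.cast_natAbs, Int.cast_abs]
    rw [I_mul_lamM, ← sq_abs, habs, ← Complex.ofReal_intCast]
    simp only [Finset.mem_insert, Finset.mem_singleton] at hk
    exact le_norm_deriv_canonicalProduct_shiftM (by omega) (by rw [← habs, sq_abs])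

/-- **Estimates on the canonical product `P` vanishing at the spectrum `{iλ_k^±}`.**
`P` is entire of exponential type at most `π`, it decays like `(1+|x|)^{-3} e^{√2 π √|x|}`
on the real axis, and its derivative at the zeros `iλ_k^±` admits the stated lower
bounds. -/
theorem canonical_product_estimates :
    ∃ P : ℂ → ℂ,
      TendstoLocallyUniformly Ppartial P atTop ∧
      Differentiable ℂ P ∧
      -- exponential type at most π
      (∀ ε > (0:ℝ), ∃ C > (0:ℝ), ∀ z : ℂ, ‖P z‖ ≤ C * Real.exp ((π + ε) * ‖z‖)) ∧
      ∃ C > (0:ℝ),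
        -- (a) decay on the real axis
        (∀ x : ℝ, ‖P (x:ℂ)‖ ≤ C * Real.exp (Real.sqrt 2 * π * Real.sqrt |x|)
            / (1 + |x|)^3) ∧
        -- (b) lower bound for P' at the hyperbolic zeros
        (∀ k : ℤ, k ≠ 0 → k ≠ 2 → k ≠ -2 →
          Real.exp (Real.sqrt 2 * π * Real.sqrt |(k:ℝ)|) / (C * |(k:ℝ)|^3)
            ≤ ‖deriv P (Complex.I * lamP k)‖) ∧
        -- (c) lower bound for P' at the parabolic zeros
        (∀ k : ℤ, k ≠ 0 → k ≠ 2 → k ≠ -2 →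
          Real.exp (π * (k:ℝ)^2) / (C * |(k:ℝ)|^7)
            ≤ ‖deriv P (Complex.I * lamM k)‖) := by
  refine ⟨canonicalProduct, tendstoLocallyUniformly_Ppartial, differentiable_canonicalProduct,
    fun ε => exists_norm_canonicalProduct_le_exp, ?_⟩
  obtain ⟨A, -, hreal⟩ := exists_norm_canonicalProduct_ofReal_le
  obtain ⟨C, hC, hAC, hP, hM⟩ := ((eventually_gt_atTop 0).and <| (eventually_ge_atTop A).and <|
    eventually_le_norm_deriv_lamP.and eventually_le_norm_deriv_lamM).exists
  refine ⟨C, hC, fun x => (hreal x).trans ?_, fun k h0 h2 h2' => hP k ⟨h0, h2, h2'⟩,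
    fun k h0 h2 h2' => hM k ⟨h0, h2, h2'⟩⟩
  gcongr
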